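/- Poincaré-type inequality: Suppose Q(u) ≥ 0 for every u ∈ C_c^∞(Ω) and Q admits a ground state v. Then there exists a continuous function W : Ω → ℝ with W > 0 everywhere such that for every ψ ∈ C_c^∞(Ω) satisfying ∫_Ω ψ v dx ≠ 0 there exists a constant C > 0 such that C^{−1} ∫_Ω W|u|^p dx ≤ Q(u) + C |∫_Ω u ψ dx|^p for all u ∈ C_c^∞(Ω). -/

import Mathlib

open MeasureTheory Filter
open scoped RealInnerProductSpace Topology

noncomputable section

/-- Euclidean space `ℝ^d`. -/
abbrev Euc (d : ℕ) := EuclideanSpace ℝ (Fin d)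

/-- A test function on `Ω`: smooth with compact support contained in `Ω`. -/
def IsTestFun {d : ℕ} (Ω : Set (Euc d)) (u : Euc d → ℝ) : Prop :=
  ContDiff ℝ (⊤ : ℕ∞) u ∧ HasCompactSupport u ∧ tsupport u ⊆ Ω

/-- The energy functional `Q(u) = ∫_Ω (|∇u|^p + V |u|^p) dx`. -/
def energyQ {d : ℕ} (Ω : Set (Euc d)) (V : Euc d → ℝ) (p : ℝ) (u : Euc d → ℝ) : ℝ :=
  ∫ x in Ω, (‖gradient u x‖ ^ p + V x * |u x| ^ p)

/-- `V` is measurable and bounded on every compact subset of `Ω`. -/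
def LocBddPotential {d : ℕ} (Ω : Set (Euc d)) (V : Euc d → ℝ) : Prop :=
  Measurable V ∧ ∀ K : Set (Euc d), K ⊆ Ω → IsCompact K → ∃ C : ℝ, ∀ x ∈ K, |V x| ≤ C

/-- A positive supersolution of `Q'(u) = 0` in `Ω`. -/
def IsPositiveSupersolution {d : ℕ} (Ω : Set (Euc d)) (V : Euc d → ℝ) (p : ℝ)
    (v : Euc d → ℝ) : Prop :=
  ContDiffOn ℝ 1 v Ω ∧ (∀ x ∈ Ω, 0 < v x) ∧
    ∀ φ : Euc d → ℝ, IsTestFun Ω φ → (∀ x, 0 ≤ φ x) →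
      0 ≤ ∫ x in Ω, (‖gradient v x‖ ^ (p - 2) * ⟪gradient v x, gradient φ x⟫
            + V x * v x ^ (p - 1) * φ x)

/-- A positive (weak) solution of `Q'(u) = 0` in `Ω`. -/
def IsPositiveSolution {d : ℕ} (Ω : Set (Euc d)) (V : Euc d → ℝ) (p : ℝ)
    (v : Euc d → ℝ) : Prop :=
  ContDiffOn ℝ 1 v Ω ∧ (∀ x ∈ Ω, 0 < v x) ∧
    ∀ φ : Euc d → ℝ, IsTestFun Ω φ →
      (∫ x in Ω, (‖gradient v x‖ ^ (p - 2) * ⟪gradient v x, gradient φ x⟫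
            + V x * v x ^ (p - 1) * φ x)) = 0

/-- A null sequence for the functional `Q`. -/
def IsNullSequence {d : ℕ} (Ω : Set (Euc d)) (V : Euc d → ℝ) (p : ℝ)
    (u : ℕ → Euc d → ℝ) : Prop :=
  (∀ k, IsTestFun Ω (u k)) ∧ (∀ k x, 0 ≤ u k x) ∧
    ∃ B : Set (Euc d), IsOpen B ∧ IsCompact (closure B) ∧ closure B ⊆ Ω ∧
      (∀ k, (∫ x in B, u k x ^ p) = 1) ∧
      Tendsto (fun k => energyQ Ω V p (u k)) atTop (𝓝 0)

/-- A ground state of `Q`: a positive `C¹` function on `Ω` which is the limit in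
`L^p_loc(Ω)` of a null sequence. -/
def IsGroundState {d : ℕ} (Ω : Set (Euc d)) (V : Euc d → ℝ) (p : ℝ)
    (v : Euc d → ℝ) : Prop :=
  ContDiffOn ℝ 1 v Ω ∧ (∀ x ∈ Ω, 0 < v x) ∧
    ∃ u : ℕ → Euc d → ℝ, IsNullSequence Ω V p u ∧
      ∀ K : Set (Euc d), K ⊆ Ω → IsCompact K →
        Tendsto (fun k => ∫ x in K, |u k x - v x| ^ p) atTop (𝓝 0)

/-- `Q` has a weighted spectral gap (is strictly positive) in `Ω`. -/
def HasSpectralGap {d : ℕ} (Ω : Set (Euc d)) (V : Euc d → ℝ) (p : ℝ) : Prop :=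
  ∃ W : Euc d → ℝ, ContinuousOn W Ω ∧ (∀ x ∈ Ω, 0 < W x) ∧
    ∀ u : Euc d → ℝ, IsTestFun Ω u → (∫ x in Ω, W x * |u x| ^ p) ≤ energyQ Ω V p u

/-- `c_B`: the infimum of `Q(u)` over test functions with `∫_B |u|^p = 1`. -/
def cB {d : ℕ} (Ω B : Set (Euc d)) (V : Euc d → ℝ) (p : ℝ) : ℝ :=
  sInf { q : ℝ | ∃ u : Euc d → ℝ, IsTestFun Ω u ∧ (∫ x in B, |u x| ^ p) = 1 ∧
    q = energyQ Ω V p u }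

/-- The Picone Lagrangian `L(u,v)`. -/
def piconeL {d : ℕ} (p : ℝ) (u v : Euc d → ℝ) (x : Euc d) : ℝ :=
  ‖gradient u x‖ ^ p + (p - 1) * (u x / v x) ^ p * ‖gradient v x‖ ^ p
    - p * (u x / v x) ^ (p - 1) *
        (‖gradient v x‖ ^ (p - 2) * ⟪gradient u x, gradient v x⟫)


namespace PT
variable {d : ℕ}

/-! ### Pointwise inequalities -/

/-- Picone-type remainder. -/
def Lag (p : ℝ) (a b : Euc d) : ℝ :=
  ‖a + b‖ ^ p - ‖a‖ ^ p - p * (‖a‖ ^ (p - 2) * ⟪a, b⟫)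

lemma rpow_sub_two_mul_sq {p : ℝ} (hp : 1 < p) {t : ℝ} (ht : 0 ≤ t) :
    t ^ (p - 2) * (t * t) = t ^ p := by
  rcases ht.eq_or_lt with h | h
  · subst h
    simp [Real.zero_rpow (by linarith : p ≠ 0)]
  · rw [← sq, ← Real.rpow_natCast t 2, ← Real.rpow_add h]
    congr 1
    push_cast; ring

lemma young_aux {p : ℝ} (hp : 1 < p) {s t : ℝ} (hs : 0 ≤ s) (ht : 0 ≤ t) :
    p * (s ^ (p - 1) * t) ≤ (p - 1) * s ^ p + t ^ p := by
  have hq : (p / (p - 1)).HolderConjugate p := by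
    have := (Real.HolderConjugate.conjExponent hp).symm
    simpa [Real.conjExponent] using this
  have h := Real.young_inequality_of_nonneg (Real.rpow_nonneg hs (p - 1)) ht hq
  have hp1 : 0 < p - 1 := by linarith
  rw [← Real.rpow_mul hs] at h
  have e : (p - 1) * (p / (p - 1)) = p := by field_simp
  rw [e] at h
  have h2 := mul_le_mul_of_nonneg_left h (by linarith : 0 ≤ p)
  calc _ ≤ _ := h2
    _ = _ := by field_simp

lemma Lag_nonneg {p : ℝ} (hp : 1 < p) (a b : Euc d) : 0 ≤ Lag p a b := by
  have h1 : ⟪a, a + b⟫ ≤ ‖a‖ * ‖a + b‖ := real_inner_le_norm a (a + b)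
  rw [inner_add_right, real_inner_self_eq_norm_mul_norm] at h1
  have h2 := young_aux hp (norm_nonneg a) (norm_nonneg (a + b))
  have h3 := rpow_sub_two_mul_sq hp (norm_nonneg a)
  have h4 : ‖a‖ ^ (p - 2) * (‖a‖ * ‖a + b‖) = ‖a‖ ^ (p - 1) * ‖a + b‖ := by
    rcases (norm_nonneg a).eq_or_lt with h | h
    · rw [← h]; simp [Real.zero_rpow (by linarith : p - 1 ≠ 0)]
    · rw [← mul_assoc, ← Real.rpow_add_one h.ne']; ring_nf
  have h5 : 0 ≤ ‖a‖ ^ (p - 2) := by positivity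
  have h6 := mul_le_mul_of_nonneg_left h1 h5
  rw [mul_add, h3, h4] at h6
  unfold Lag
  nlinarith

lemma mid_lt {p : ℝ} (hp : 1 < p) {x y : Euc d} (h : x ≠ y) :
    ‖(1 / 2 : ℝ) • x + (1 / 2 : ℝ) • y‖ ^ p < (1 / 2) * ‖x‖ ^ p + (1 / 2) * ‖y‖ ^ p := by
  by_cases hn : ‖x‖ = ‖y‖
  · have : ‖(1 / 2 : ℝ) • x + (1 / 2 : ℝ) • y‖ < ‖y‖ :=
      norm_combo_lt_of_ne hn.le le_rfl h (by norm_num) (by norm_num) (by norm_num)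
    have := Real.rpow_lt_rpow (norm_nonneg _) this (by linarith : 0 < p)
    rw [hn]; linarith
  · have h1 := (strictConvexOn_rpow hp).2 (norm_nonneg x) (norm_nonneg y) hn
      (by norm_num : (0:ℝ) < 1 / 2) (by norm_num : (0:ℝ) < 1 / 2) (by norm_num)
    simp only [smul_eq_mul] at h1
    refine lt_of_le_of_lt ?_ h1
    apply Real.rpow_le_rpow (norm_nonneg _) _ (by linarith)
    refine (norm_add_le _ _).trans ?_
    simp [norm_smul]

lemma Lag_pos {p : ℝ} (hp : 1 < p) {a b : Euc d} (hb : b ≠ 0) : 0 < Lag p a b := by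
  have h1 := Lag_nonneg hp a ((1 / 2 : ℝ) • b)
  have h2 := mid_lt hp (x := a) (y := a + b) (by simpa using hb)
  have e : (1 / 2 : ℝ) • a + (1 / 2 : ℝ) • (a + b) = a + (1 / 2 : ℝ) • b := by
    rw [smul_add, ← add_assoc, ← add_smul]; norm_num
  rw [e] at h2
  unfold Lag at *
  rw [inner_smul_right] at h1
  nlinarith

lemma continuous_dual {E : Type*} [NormedAddCommGroup E] [NormedSpace ℝ E] (p : ℝ) (hp : 1 < p) :
    Continuous (fun a : E => (‖a‖ ^ (p - 2)) • a) := by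
  rw [continuous_iff_continuousAt]
  intro a
  by_cases ha : a = 0
  · subst ha
    have : Tendsto (fun a : E => ‖a‖ ^ (p - 1)) (𝓝 0) (𝓝 0) := by
      have : Continuous (fun a : E => ‖a‖ ^ (p - 1)) :=
        continuous_norm.rpow_const (fun _ => Or.inr (by linarith))
      have h := this.tendsto 0
      simpa [Real.zero_rpow (by linarith : p - 1 ≠ 0)] using h
    rw [ContinuousAt, smul_zero]
    refine squeeze_zero_norm (fun a => ?_) this
    rw [norm_smul, Real.norm_of_nonneg (by positivity)]
    rcases (norm_nonneg a).eq_or_lt with h | h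
    · rw [← h]; simp [Real.zero_rpow (by linarith : p - 1 ≠ 0)]
    · rw [← Real.rpow_add_one h.ne']; ring_nf; rfl
  · have h1 : ContinuousAt (fun a : E => ‖a‖ ^ (p - 2)) a :=
      continuous_norm.continuousAt.rpow_const (Or.inl (by simpa using ha))
    exact h1.smul continuousAt_id

lemma continuous_Lag {p : ℝ} (hp : 1 < p) :
    Continuous (fun z : Euc d × Euc d => Lag p z.1 z.2) := by
  unfold Lag
  have h1 : Continuous (fun z : Euc d × Euc d => ‖z.1‖ ^ (p - 2) * ⟪z.1, z.2⟫) := by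
    have := ((continuous_dual (E := Euc d) p hp).comp continuous_fst).inner (𝕜 := ℝ)
      (continuous_snd (X := Euc d) (Y := Euc d))
    simpa [inner_smul_left] using this
  have h2 : Continuous (fun z : Euc d × Euc d => ‖z.1 + z.2‖ ^ p) :=
    (continuous_fst.add continuous_snd).norm.rpow_const (fun _ => Or.inr (by linarith))
  have h3 : Continuous (fun z : Euc d × Euc d => ‖z.1‖ ^ p) :=
    continuous_fst.norm.rpow_const (fun _ => Or.inr (by linarith))
  exact (h2.sub h3).sub (h1.const_mul p)

/-- Compactness + homogeneity. -/
lemma soft {E : Type*} [NormedAddCommGroup E] [NormedSpace ℝ E] [FiniteDimensional ℝ E]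
    {p : ℝ} (hp : 1 < p) (F G : E × E → ℝ) (hF : Continuous F) (hG : Continuous G)
    (hFh : ∀ s : ℝ, 0 < s → ∀ z, F (s • z) = s ^ p * F z)
    (hGh : ∀ s : ℝ, 0 < s → ∀ z, G (s • z) = s ^ p * G z)
    (hG0 : ∀ z, 0 ≤ G z) (hFG : ∀ z, G z = 0 → F z ≤ 0) {ε : ℝ} (hε : 0 < ε) :
    ∃ C : ℝ, 0 < C ∧ ∀ a b, F (a, b) ≤ ε * (‖a‖ ^ p + ‖b‖ ^ p) + C * G (a, b) := by
  set S : Set (E × E) := Metric.sphere 0 1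
  have hS : IsCompact S := isCompact_sphere 0 1
  have hT : IsCompact (S ∩ {z | ε ≤ F z}) := hS.inter_right (isClosed_le continuous_const hF)
  obtain ⟨M, hM⟩ := hS.exists_bound_of_continuousOn hF.continuousOn
  obtain ⟨c, hc, hcG⟩ : ∃ c : ℝ, 0 < c ∧ ∀ z ∈ S ∩ {z | ε ≤ F z}, c ≤ G z := by
    rcases (S ∩ {z | ε ≤ F z}).eq_empty_or_nonempty with h | h
    · exact ⟨1, one_pos, by simp [h]⟩
    · obtain ⟨z, hz, hmin⟩ := hT.exists_isMinOn h hG.continuousOn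
      refine ⟨G z, lt_of_le_of_ne (hG0 z) ?_, fun y hy => hmin hy⟩
      intro h0
      have := hFG z h0.symm
      have h3 : ε ≤ F z := hz.2
      linarith
  have hS1 : ∀ z ∈ S, F z ≤ ε * (‖z.1‖ ^ p + ‖z.2‖ ^ p) + ((|M| + 1) / c) * G z := by
    intro z hz
    have hz1 : ‖z‖ = 1 := by simpa [S] using hz
    have h1 : 1 ≤ ‖z.1‖ ^ p + ‖z.2‖ ^ p := by
      rcases le_total ‖z.1‖ ‖z.2‖ with h | h
      · have : ‖z.2‖ = 1 := by rw [← hz1, Prod.norm_def, max_eq_right h]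
        rw [this, Real.one_rpow]
        have : 0 ≤ ‖z.1‖ ^ p := by positivity
        linarith
      · have : ‖z.1‖ = 1 := by rw [← hz1, Prod.norm_def, max_eq_left h]
        rw [this, Real.one_rpow]
        have : 0 ≤ ‖z.2‖ ^ p := by positivity
        linarith
    have hG := hG0 z
    by_cases hcase : ε ≤ F z
    · have h2 := hcG z ⟨hz, hcase⟩
      have h3 := hM z hz
      have h4 : F z ≤ |M| := (le_abs_self _).trans (h3.trans (le_abs_self _))
      have h5 : |M| + 1 ≤ ((|M| + 1) / c) * G z := by
        rw [div_mul_eq_mul_div, le_div_iff₀ hc]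
        have : 0 ≤ |M| + 1 := by positivity
        nlinarith
      nlinarith
    · have : 0 ≤ ((|M| + 1) / c) * G z := by positivity
      push Not at hcase
      nlinarith
  refine ⟨(|M| + 1) / c, by positivity, fun a b => ?_⟩
  have hp0 : (0:ℝ) < p := by linarith
  by_cases hz : (a, b) = (0 : E × E)
  · have h0 : F (a, b) = 0 := by
      have := hFh 2 two_pos (a, b)
      rw [hz, smul_zero] at this
      rw [hz]
      have h2 : (1:ℝ) < 2 ^ p := Real.one_lt_rpow (by norm_num) hp0
      nlinarith
    rw [h0]
    have := hG0 (a, b)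
    positivity
  · have hn : 0 < ‖(a, b)‖ := norm_pos_iff.mpr hz
    set s := ‖(a, b)‖ with hs
    have hz' : s⁻¹ • (a, b) ∈ S := by
      simp only [S, mem_sphere_zero_iff_norm, norm_smul, norm_inv, norm_norm, hs]
      exact inv_mul_cancel₀ hn.ne'
    have h1 := hS1 _ hz'
    rw [hFh _ (inv_pos.mpr hn), hGh _ (inv_pos.mpr hn)] at h1
    simp only [Prod.smul_fst, Prod.smul_snd, norm_smul, norm_inv, Real.norm_of_nonneg hn.le] at h1
    rw [Real.mul_rpow (by positivity) (by positivity),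
      Real.mul_rpow (by positivity) (by positivity)] at h1
    have hsp : 0 < s⁻¹ ^ p := by positivity
    have : s⁻¹ ^ p * F (a, b) ≤ s⁻¹ ^ p *
        (ε * (‖a‖ ^ p + ‖b‖ ^ p) + (|M| + 1) / c * G (a, b)) := by
      calc _ ≤ _ := h1
        _ = _ := by ring
    exact le_of_mul_le_mul_left this hsp

lemma soft_Lag {p : ℝ} (hp : 1 < p) {ε : ℝ} (hε : 0 < ε) :
    ∃ C : ℝ, 0 < C ∧ ∀ a b : Euc d, ‖b‖ ^ p ≤ ε * ‖a‖ ^ p + C * Lag p a b := by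
  obtain ⟨C, hC, h⟩ := soft (E := Euc d) hp (fun z => ‖z.2‖ ^ p) (fun z => Lag p z.1 z.2)
    (continuous_snd.norm.rpow_const (fun _ => Or.inr (by linarith))) (continuous_Lag hp)
    (by
      intro s hs z
      simp only [Prod.smul_snd, norm_smul, Real.norm_of_nonneg hs.le]
      rw [Real.mul_rpow hs.le (norm_nonneg _)])
    (by
      intro s hs z
      simp only [Lag, Prod.smul_snd, Prod.smul_fst, ← smul_add, norm_smul,
        Real.norm_of_nonneg hs.le, inner_smul_left, inner_smul_right]
      rw [Real.mul_rpow hs.le (norm_nonneg _), Real.mul_rpow hs.le (norm_nonneg _),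
        Real.mul_rpow hs.le (norm_nonneg _), ← rpow_sub_two_mul_sq hp hs.le]
      simp only [RCLike.conj_to_real]
      ring)
    (fun z => Lag_nonneg hp _ _)
    (by
      intro z hz
      by_cases hb : z.2 = 0
      · simp [hb, Real.zero_rpow (by linarith : p ≠ 0)]
      · exact absurd hz (Lag_pos hp hb).ne')
    (ε := min (ε / 2) (1 / 2)) (by positivity)
  refine ⟨2 * C, by positivity, fun a b => ?_⟩
  have h1 := h a b
  have h2 : min (ε / 2) (1 / 2) * (‖a‖ ^ p + ‖b‖ ^ p) ≤ (ε / 2) * ‖a‖ ^ p + (1 / 2) * ‖b‖ ^ p := by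
    rw [mul_add]
    gcongr
    · exact min_le_left _ _
    · exact min_le_right _ _
  simp only at h1
  linarith

lemma soft_norm {E : Type*} [NormedAddCommGroup E] [NormedSpace ℝ E] [FiniteDimensional ℝ E]
    {p : ℝ} (hp : 1 < p) {ε : ℝ} (hε : 0 < ε) :
    ∃ C : ℝ, 0 < C ∧ ∀ a b : E, |‖b‖ ^ p - ‖a‖ ^ p| ≤ ε * ‖a‖ ^ p + C * ‖b - a‖ ^ p := by
  obtain ⟨C, hC, h⟩ := soft (E := E) hp (fun z => |‖z.1 + z.2‖ ^ p - ‖z.1‖ ^ p|)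
    (fun z => ‖z.2‖ ^ p)
    ((((continuous_fst.add continuous_snd).norm.rpow_const (fun _ => Or.inr (by linarith))).sub
      (continuous_fst.norm.rpow_const (fun _ => Or.inr (by linarith)))).abs)
    (continuous_snd.norm.rpow_const (fun _ => Or.inr (by linarith)))
    (by
      intro s hs z
      simp only [Prod.smul_snd, Prod.smul_fst, ← smul_add, norm_smul, Real.norm_of_nonneg hs.le]
      rw [Real.mul_rpow hs.le (norm_nonneg _), Real.mul_rpow hs.le (norm_nonneg _), ← mul_sub,
        abs_mul, abs_of_nonneg (a := s ^ p) (by positivity)])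
    (by
      intro s hs z
      simp only [Prod.smul_snd, norm_smul, Real.norm_of_nonneg hs.le]
      rw [Real.mul_rpow hs.le (norm_nonneg _)])
    (fun z => by positivity)
    (by
      intro z hz
      have : z.2 = 0 := by
        have := (Real.rpow_eq_zero (norm_nonneg _) (by linarith : p ≠ 0)).mp hz
        simpa using this
      simp [this])
    hε
  refine ⟨ε + C, by positivity, fun a b => ?_⟩
  have h1 := h a (b - a)
  simp only [add_sub_cancel] at h1
  linarith

lemma add_rpow_le {p : ℝ} (hp : 1 < p) {s t : ℝ} (hs : 0 ≤ s) (ht : 0 ≤ t) :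
    (s + t) ^ p ≤ 2 ^ p * (s ^ p + t ^ p) := by
  have h1 : (s + t) ^ p ≤ (2 * max s t) ^ p := by
    apply Real.rpow_le_rpow (by positivity) _ (by linarith)
    have := le_max_left s t
    have := le_max_right s t
    linarith
  rw [Real.mul_rpow (by norm_num) (le_max_of_le_left hs)] at h1
  refine h1.trans (mul_le_mul_of_nonneg_left ?_ (by positivity))
  have := Real.rpow_nonneg hs p
  have := Real.rpow_nonneg ht p
  rcases max_choice s t with h | h <;> rw [h] <;> linarith

end PT

namespace PT
variable {d : ℕ}

/-! ### Gradient calculus, cutoffs, mollification -/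

def C1c (Ω : Set (Euc d)) (u : Euc d → ℝ) : Prop :=
  ContDiff ℝ 1 u ∧ HasCompactSupport u ∧ tsupport u ⊆ Ω

lemma C1c_of_test {Ω : Set (Euc d)} {u : Euc d → ℝ} (h : IsTestFun Ω u) : C1c Ω u :=
  ⟨h.1.of_le (by exact_mod_cast le_top), h.2.1, h.2.2⟩

lemma continuous_gradient {f : Euc d → ℝ} (h : ContDiff ℝ 1 f) : Continuous (gradient f) :=
  (InnerProductSpace.toDual ℝ (Euc d)).symm.continuous.comp (h.continuous_fderiv one_ne_zero)

lemma grad_zero {f : Euc d → ℝ} {x : Euc d} (h : x ∉ tsupport f) : gradient f x = 0 := by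
  have : f =ᶠ[𝓝 x] fun _ => 0 := notMem_tsupport_iff_eventuallyEq.mp h
  rw [this.gradient_eq]; simp [gradient]

lemma grad_add {f g : Euc d → ℝ} {x : Euc d} (hf : DifferentiableAt ℝ f x)
    (hg : DifferentiableAt ℝ g x) :
    gradient (fun y => f y + g y) x = gradient f x + gradient g x := by
  simp [gradient, fderiv_fun_add hf hg]

lemma grad_sub {f g : Euc d → ℝ} {x : Euc d} (hf : DifferentiableAt ℝ f x)
    (hg : DifferentiableAt ℝ g x) :
    gradient (fun y => f y - g y) x = gradient f x - gradient g x := by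
  simp [gradient, fderiv_fun_sub hf hg]

lemma grad_mul {f g : Euc d → ℝ} {x : Euc d} (hf : DifferentiableAt ℝ f x)
    (hg : DifferentiableAt ℝ g x) :
    gradient (fun y => f y * g y) x = f x • gradient g x + g x • gradient f x := by
  simp [gradient, fderiv_fun_mul hf hg]

lemma grad_const_mul {f : Euc d → ℝ} {x : Euc d} (c : ℝ) (hf : DifferentiableAt ℝ f x) :
    gradient (fun y => c * f y) x = c • gradient f x := by
  simp [gradient, fderiv_const_mul hf]

lemma grad_abs_rpow {f : Euc d → ℝ} {x : Euc d} {p : ℝ} (hp : 1 < p)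
    (hf : DifferentiableAt ℝ f x) :
    gradient (fun y => |f y| ^ p) x = (p * |f x| ^ (p - 2) * f x) • gradient f x := by
  have := ((hasDerivAt_abs_rpow (f x) hp).comp_hasFDerivAt x hf.hasFDerivAt).fderiv
  have e : ((fun x : ℝ ↦ |x| ^ p) ∘ f) = fun y => |f y| ^ p := rfl
  rw [e] at this
  simp [gradient, this]

lemma contDiff_abs_rpow {f : Euc d → ℝ} {p : ℝ} (hp : 1 < p) (hf : ContDiff ℝ 1 f) :
    ContDiff ℝ 1 (fun y => |f y| ^ p) := by
  simpa using hf.norm_rpow hp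

lemma exists_cutoff {Ω K : Set (Euc d)} (hΩ : IsOpen Ω) (hK : IsCompact K) (hKΩ : K ⊆ Ω) :
    ∃ χ : Euc d → ℝ, IsTestFun Ω χ ∧ (∀ x, 0 ≤ χ x) ∧ (∀ x, χ x ≤ 1) ∧
      ∀ᶠ x in 𝓝ˢ K, χ x = 1 := by
  obtain ⟨K', hK', h1, h2⟩ := exists_compact_between hK hΩ hKΩ
  obtain ⟨f, hf1, hf0, hf⟩ := exists_contMDiffMap_one_nhds_of_subset_interior
    (modelWithCornersSelf ℝ (Euc d)) (n := (⊤ : ℕ∞)) hK.isClosed h1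
  have hts : tsupport f ⊆ K' := by
    apply closure_minimal _ hK'.isClosed
    intro x hx
    by_contra hxK
    exact hx (hf0 x hxK)
  exact ⟨f, ⟨f.contMDiff.contDiff, hK'.of_isClosed_subset (isClosed_tsupport _) hts,
    hts.trans h2⟩, fun x => (hf x).1, fun x => (hf x).2, hf1⟩

lemma moll {Ω : Set (Euc d)} (hΩ : IsOpen Ω) {z : Euc d → ℝ} (hz : C1c Ω z) :
    ∃ K : Set (Euc d), IsCompact K ∧ K ⊆ Ω ∧ tsupport z ⊆ K ∧ ∀ ε > 0, ∃ g : Euc d → ℝ,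
      IsTestFun Ω g ∧ tsupport g ⊆ K ∧ (∀ x, |g x - z x| ≤ ε) ∧
      ∀ x, ‖gradient g x - gradient z x‖ ≤ ε := by
  obtain ⟨hz1, hz2, hz3⟩ := hz
  obtain ⟨δ, hδ, hδΩ⟩ := IsCompact.exists_cthickening_subset_open hz2 hΩ hz3
  refine ⟨Metric.cthickening δ (tsupport z), IsCompact.cthickening hz2, hδΩ,
    Metric.self_subset_cthickening _, fun ε hε => ?_⟩
  have uc1 : UniformContinuous z := hz2.uniformContinuous_of_continuous hz1.continuous
  have uc2 : UniformContinuous (fderiv ℝ z) :=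
    (hz2.fderiv ℝ).uniformContinuous_of_continuous (hz1.continuous_fderiv one_ne_zero)
  obtain ⟨δ1, hδ1, h1⟩ := Metric.uniformContinuous_iff.mp uc1 ε hε
  obtain ⟨δ2, hδ2, h2⟩ := Metric.uniformContinuous_iff.mp uc2 ε hε
  set r := min δ (min δ1 δ2) with hr
  have hr0 : 0 < r := by positivity
  let φ : ContDiffBump (0 : Euc d) := ⟨r / 2, r, half_pos hr0, half_lt_self hr0⟩
  set g : Euc d → ℝ :=
    convolution (φ.normed volume) z (ContinuousLinearMap.lsmul ℝ ℝ) volume with hg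
  have hts : tsupport g ⊆ Metric.cthickening δ (tsupport z) := by
    apply closure_minimal _ Metric.isClosed_cthickening
    refine (support_convolution_subset (L := ContinuousLinearMap.lsmul ℝ ℝ)).trans ?_
    rintro x ⟨a, ha, b, hb, rfl⟩
    rw [φ.support_normed_eq] at ha
    refine Metric.mem_cthickening_of_dist_le _ b _ _ (subset_tsupport _ hb) ?_
    have : ‖a‖ < r := by simpa [φ] using ha
    simp only [dist_eq_norm, add_sub_cancel_right]
    exact this.le.trans (min_le_left _ _)
  have hli : LocallyIntegrable (φ.normed volume) (volume : Measure (Euc d)) :=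
    (φ.continuous_normed).locallyIntegrable
  refine ⟨g, ⟨?_, ?_, hts.trans hδΩ⟩, hts, fun x => ?_, fun x => ?_⟩
  · exact φ.hasCompactSupport_normed.contDiff_convolution_left _ φ.contDiff_normed
      hz1.continuous.locallyIntegrable
  · exact (IsCompact.cthickening hz2).of_isClosed_subset (isClosed_tsupport _) hts
  · have := φ.dist_normed_convolution_le (μ := volume) (x₀ := x) (ε := ε)
      hz1.continuous.aestronglyMeasurable (g := z) (fun y hy => (h1 (lt_of_lt_of_le hy
        ((min_le_right _ _).trans (min_le_left _ _)))).le)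
    simpa [Real.dist_eq, hg] using this
  · have e := (hz2.hasFDerivAt_convolution_right (ContinuousLinearMap.lsmul ℝ ℝ) hli hz1 x).fderiv
    have e2 : (ContinuousLinearMap.lsmul ℝ ℝ).precompR (Euc d) =
        (ContinuousLinearMap.lsmul ℝ ℝ : ℝ →L[ℝ] (Euc d →L[ℝ] ℝ) →L[ℝ] (Euc d →L[ℝ] ℝ)) := by
      ext; simp [ContinuousLinearMap.precompR]
    rw [e2] at e
    have := φ.dist_normed_convolution_le (μ := volume) (x₀ := x) (ε := ε)
      (hz1.continuous_fderiv one_ne_zero).aestronglyMeasurable (g := fderiv ℝ z)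
      (fun y hy => (h2 (lt_of_lt_of_le hy
        ((min_le_right _ _).trans (min_le_right _ _)))).le)
    rw [← e, dist_eq_norm] at this
    rw [gradient, gradient, ← map_sub, LinearIsometryEquiv.norm_map]
    exact this

lemma mollc {Ω : Set (Euc d)} (hΩ : IsOpen Ω) {f : Euc d → ℝ} (hf : Continuous f)
    (hc : HasCompactSupport f) (hs : tsupport f ⊆ Ω) :
    ∃ K : Set (Euc d), IsCompact K ∧ K ⊆ Ω ∧ tsupport f ⊆ K ∧ ∀ ε > 0, ∃ g : Euc d → ℝ,
      IsTestFun Ω g ∧ tsupport g ⊆ K ∧ (∀ x, |g x - f x| ≤ ε) := by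
  obtain ⟨χ, hχ, h0, h1, hone⟩ := exists_cutoff hΩ hc hs
  have hone' : ∀ x ∈ tsupport f, χ x = 1 := fun x hx => hone.self_of_nhdsSet x hx
  refine ⟨tsupport χ, hχ.2.1, hχ.2.2, fun x hx => subset_tsupport _ ?_, fun ε hε => ?_⟩
  · simp [hone' x hx]
  obtain ⟨g, hg, hgf⟩ := (hc.uniformContinuous_of_continuous hf).exists_contDiff_dist_le hε
  refine ⟨fun x => χ x * g x, ⟨hχ.1.mul hg, hχ.2.1.mul_right, ?_⟩, ?_, fun x => ?_⟩
  · exact (tsupport_mul_subset_left).trans hχ.2.2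
  · exact tsupport_mul_subset_left
  · have e : χ x * g x - f x = χ x * (g x - f x) := by
      by_cases hx : x ∈ tsupport f
      · rw [hone' x hx]; ring
      · rw [image_eq_zero_of_notMem_tsupport hx]; ring
    rw [e, abs_mul, abs_of_nonneg (h0 x)]
    have := (hgf x).le
    rw [Real.dist_eq] at this
    nlinarith [h0 x, h1 x, abs_nonneg (g x - f x)]

/-! ### Integrability -/

lemma integrable_of_bdd {f : Euc d → ℝ} {K : Set (Euc d)} (hK : IsCompact K)
    (hf : AEStronglyMeasurable f volume) {C : ℝ} (hC : ∀ x ∈ K, |f x| ≤ C)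
    (h0 : ∀ x, x ∉ K → f x = 0) : Integrable f := by
  rw [← integrableOn_iff_integrable_of_support_subset (s := K)
    (fun x hx => by by_contra h; exact hx (h0 x h))]
  refine Measure.integrableOn_of_bounded (M := C) hK.measure_lt_top.ne hf ?_
  filter_upwards [ae_restrict_mem hK.measurableSet] with x hx
  exact hC x hx

lemma integrable_cc {f : Euc d → ℝ} {K : Set (Euc d)} (hK : IsCompact K)
    (hf : Continuous f) (h0 : ∀ x, x ∉ K → f x = 0) : Integrable f := by
  obtain ⟨C, hC⟩ := hK.exists_bound_of_continuousOn hf.continuousOn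
  exact integrable_of_bdd hK hf.aestronglyMeasurable hC h0

lemma integrable_V {Ω : Set (Euc d)} {V : Euc d → ℝ} (hV : LocBddPotential Ω V)
    {f : Euc d → ℝ} {K : Set (Euc d)} (hK : IsCompact K) (hKΩ : K ⊆ Ω)
    (hf : Continuous f) (h0 : ∀ x, x ∉ K → f x = 0) : Integrable (fun x => V x * f x) := by
  obtain ⟨C, hC⟩ := hK.exists_bound_of_continuousOn hf.continuousOn
  obtain ⟨M, hM⟩ := hV.2 K hKΩ hK
  refine integrable_of_bdd hK (hV.1.aestronglyMeasurable.mul hf.aestronglyMeasurable)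
    (C := M * C) (fun x hx => ?_) (fun x hx => by simp [h0 x hx])
  rw [abs_mul]
  exact mul_le_mul (hM x hx) (hC x hx) (abs_nonneg _) ((abs_nonneg _).trans (hM x hx))

lemma cont_grad_rpow {p : ℝ} (hp : 1 < p) {u : Euc d → ℝ} (hu : ContDiff ℝ 1 u) :
    Continuous (fun x => ‖gradient u x‖ ^ p) :=
  (continuous_gradient hu).norm.rpow_const (fun _ => Or.inr (by linarith))

lemma cont_abs_rpow {p : ℝ} (hp : 1 < p) {u : Euc d → ℝ} (hu : Continuous u) :
    Continuous (fun x => |u x| ^ p) :=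
  hu.abs.rpow_const (fun _ => Or.inr (by linarith))

lemma int_grad {Ω : Set (Euc d)} {p : ℝ} (hp : 1 < p) {u : Euc d → ℝ} (hu : C1c Ω u) :
    Integrable (fun x => ‖gradient u x‖ ^ p) :=
  integrable_cc hu.2.1 (cont_grad_rpow hp hu.1) (fun x hx => by
    rw [grad_zero hx]; simp [Real.zero_rpow (by linarith : p ≠ 0)])

lemma int_V {Ω : Set (Euc d)} {V : Euc d → ℝ} (hV : LocBddPotential Ω V) {p : ℝ} (hp : 1 < p)
    {u : Euc d → ℝ} (hu : C1c Ω u) : Integrable (fun x => V x * |u x| ^ p) :=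
  integrable_V hV hu.2.1 hu.2.2 (cont_abs_rpow hp hu.1.continuous) (fun x hx => by
    rw [image_eq_zero_of_notMem_tsupport hx]; simp [Real.zero_rpow (by linarith : p ≠ 0)])

lemma energy_eq {Ω : Set (Euc d)} {V : Euc d → ℝ} (hV : LocBddPotential Ω V) {p : ℝ} (hp : 1 < p)
    {u : Euc d → ℝ} (hu : C1c Ω u) :
    energyQ Ω V p u = (∫ x, ‖gradient u x‖ ^ p) + ∫ x, V x * |u x| ^ p := by
  rw [← integral_add (int_grad hp hu) (int_V hV hp hu)]
  unfold energyQ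
  apply setIntegral_eq_integral_of_forall_compl_eq_zero
  intro x hx
  have hx' : x ∉ tsupport u := fun h => hx (hu.2.2 h)
  rw [grad_zero hx', image_eq_zero_of_notMem_tsupport hx']
  simp [Real.zero_rpow (by linarith : p ≠ 0)]

end PT

namespace PT
variable {d : ℕ}

/-! ### Convergence lemmas -/

lemma int_on {K : Set (Euc d)} (hK : IsCompact K) {f : Euc d → ℝ} (hf : Continuous f) :
    IntegrableOn f K := hf.continuousOn.integrableOn_compact hK

lemma int_on_V {K : Set (Euc d)} (hK : IsCompact K) {V : Euc d → ℝ} (hVm : Measurable V) {M : ℝ}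
    (hM : ∀ x ∈ K, |V x| ≤ M) {f : Euc d → ℝ} (hf : Continuous f) :
    IntegrableOn (fun x => V x * f x) K := by
  obtain ⟨C, hC⟩ := hK.exists_bound_of_continuousOn hf.continuousOn
  refine Measure.integrableOn_of_bounded (M := M * C) hK.measure_lt_top.ne
    (hVm.aestronglyMeasurable.mul hf.aestronglyMeasurable) ?_
  filter_upwards [ae_restrict_mem hK.measurableSet] with x hx
  rw [norm_mul]
  exact mul_le_mul (hM x hx) (hC x hx) (norm_nonneg _) ((abs_nonneg _).trans (hM x hx))

lemma conv_int {F : Type*} [NormedAddCommGroup F] [NormedSpace ℝ F] [FiniteDimensional ℝ F]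
    {p : ℝ} (hp : 1 < p) {K : Set (Euc d)} (hK : IsCompact K) {V : Euc d → ℝ} (hVm : Measurable V)
    {M : ℝ} (hM : ∀ x ∈ K, |V x| ≤ M) {g : Euc d → F} {gk : ℕ → Euc d → F} (hg : Continuous g)
    (hgk : ∀ k, Continuous (gk k))
    (hconv : Tendsto (fun k => ∫ x in K, ‖gk k x - g x‖ ^ p) atTop (𝓝 0)) :
    Tendsto (fun k => ∫ x in K, V x * ‖gk k x‖ ^ p) atTop (𝓝 (∫ x in K, V x * ‖g x‖ ^ p)) := by
  have hc : ∀ {h : Euc d → F}, Continuous h → Continuous (fun x => ‖h x‖ ^ p) := fun hh =>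
    hh.norm.rpow_const (fun _ => Or.inr (by linarith))
  rw [Metric.tendsto_atTop]
  intro ε hε
  set A := ∫ x in K, ‖g x‖ ^ p with hA
  have hA0 : 0 ≤ A := integral_nonneg fun x => by positivity
  set M' := |M| + 1
  have hM'0 : 0 < M' := by positivity
  set e := ε / (2 * M' * (A + 1)) with he
  have he0 : 0 < e := by positivity
  obtain ⟨C, hC, hs⟩ := soft_norm (E := F) hp he0
  obtain ⟨N, hN⟩ := (Metric.tendsto_atTop.mp hconv) (ε / (2 * M' * C)) (by positivity)
  refine ⟨N, fun k hk => ?_⟩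
  have h1 := hN k hk
  rw [Real.dist_eq, sub_zero] at h1
  have h1' := lt_of_le_of_lt (le_abs_self _) h1
  have hi : Continuous (fun x => ‖gk k x - g x‖ ^ p) := hc ((hgk k).sub hg)
  rw [Real.dist_eq, ← integral_sub (int_on_V hK hVm hM (hc (hgk k))) (int_on_V hK hVm hM (hc hg))]
  have hb : |∫ x in K, (V x * ‖gk k x‖ ^ p - V x * ‖g x‖ ^ p)| ≤
      ∫ x in K, M' * (e * ‖g x‖ ^ p + C * ‖gk k x - g x‖ ^ p) := by
    rw [← Real.norm_eq_abs]
    refine norm_integral_le_of_norm_le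
      (int_on hK (((hc hg).const_mul e).add (hi.const_mul C) |>.const_mul M')) ?_
    filter_upwards [ae_restrict_mem hK.measurableSet] with x hx
    rw [← mul_sub, norm_mul, Real.norm_eq_abs, Real.norm_eq_abs]
    apply mul_le_mul _ (hs _ _) (abs_nonneg _) hM'0.le
    have := hM x hx
    have := le_abs_self M
    simp only [M']; linarith
  rw [integral_const_mul, integral_add (int_on hK ((hc hg).const_mul e))
    (int_on hK (hi.const_mul C)), integral_const_mul, integral_const_mul] at hb
  refine lt_of_le_of_lt hb ?_
  have h2 : C * (∫ x in K, ‖gk k x - g x‖ ^ p) < ε / (2 * M') := by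
    calc _ < C * (ε / (2 * M' * C)) := by gcongr
      _ = _ := by field_simp
  have h3 : e * A < ε / (2 * M') := by
    calc e * A < e * (A + 1) := by gcongr; linarith
      _ = _ := by rw [he]; field_simp
  calc _ < M' * (ε / (2 * M') + ε / (2 * M')) := by gcongr
    _ = ε := by field_simp; norm_num

lemma conv_int1 {F : Type*} [NormedAddCommGroup F] [NormedSpace ℝ F] [FiniteDimensional ℝ F]
    {p : ℝ} (hp : 1 < p) {K : Set (Euc d)} (hK : IsCompact K)
    {g : Euc d → F} {gk : ℕ → Euc d → F} (hg : Continuous g)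
    (hgk : ∀ k, Continuous (gk k))
    (hconv : Tendsto (fun k => ∫ x in K, ‖gk k x - g x‖ ^ p) atTop (𝓝 0)) :
    Tendsto (fun k => ∫ x in K, ‖gk k x‖ ^ p) atTop (𝓝 (∫ x in K, ‖g x‖ ^ p)) := by
  have := conv_int hp hK (V := fun _ => 1) measurable_const (M := 1) (by simp) hg hgk hconv
  simpa using this

lemma energy_on {Ω : Set (Euc d)} {V : Euc d → ℝ} (hV : LocBddPotential Ω V) {p : ℝ} (hp : 1 < p)
    {u : Euc d → ℝ} (hu : C1c Ω u) {K : Set (Euc d)} (hK : tsupport u ⊆ K) :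
    energyQ Ω V p u = (∫ x in K, ‖gradient u x‖ ^ p) + ∫ x in K, V x * |u x| ^ p := by
  have hp0 : p ≠ 0 := by linarith
  rw [energy_eq hV hp hu, setIntegral_eq_integral_of_forall_compl_eq_zero,
    setIntegral_eq_integral_of_forall_compl_eq_zero]
  · intro x hx
    rw [image_eq_zero_of_notMem_tsupport (fun h => hx (hK h))]; simp [Real.zero_rpow hp0]
  · intro x hx
    rw [grad_zero (fun h => hx (hK h))]; simp [Real.zero_rpow hp0]

lemma tendsto_unif {F : Type*} [NormedAddCommGroup F] {p : ℝ} (hp : 1 < p) {K : Set (Euc d)}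
    (hK : IsCompact K) {h : ℕ → Euc d → F}
    (hb : ∀ n x, ‖h n x‖ ≤ 1 / ((n : ℝ) + 1)) :
    Tendsto (fun n => ∫ x in K, ‖h n x‖ ^ p) atTop (𝓝 0) := by
  have h1 : Tendsto (fun n : ℕ => (1 / ((n : ℝ) + 1)) ^ p * volume.real K) atTop (𝓝 0) := by
    have h0 := tendsto_one_div_add_atTop_nhds_zero_nat (𝕜 := ℝ)
    have := (h0.rpow_const (p := p) (Or.inr (by linarith))).mul_const (volume.real K)
    simpa [Real.zero_rpow (by linarith : p ≠ 0)] using this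
  refine squeeze_zero (fun n => integral_nonneg fun x => by positivity) (fun n => ?_) h1
  refine (le_abs_self _).trans ?_
  rw [← Real.norm_eq_abs]
  refine norm_setIntegral_le_of_norm_le_const hK.measure_lt_top (fun x _ => ?_)
  rw [Real.norm_of_nonneg (by positivity)]
  exact Real.rpow_le_rpow (norm_nonneg _) (hb n x) (by linarith)

lemma Q_nonneg {Ω : Set (Euc d)} (hΩ : IsOpen Ω) {V : Euc d → ℝ} (hV : LocBddPotential Ω V)
    {p : ℝ} (hp : 1 < p) (hQ : ∀ u : Euc d → ℝ, IsTestFun Ω u → 0 ≤ energyQ Ω V p u)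
    {z : Euc d → ℝ} (hz : C1c Ω z) : 0 ≤ energyQ Ω V p z := by
  obtain ⟨K, hK, hKΩ, hzK, h⟩ := moll hΩ hz
  choose g hg hgK hg1 hg2 using fun n : ℕ => h (1 / ((n : ℝ) + 1)) (by positivity)
  obtain ⟨M, hM⟩ := hV.2 K hKΩ hK
  have t1 := conv_int1 hp hK (continuous_gradient hz.1)
    (fun n => continuous_gradient (C1c_of_test (hg n)).1)
    (tendsto_unif hp hK (h := fun n x => gradient (g n) x - gradient z x) hg2)
  have t2 := conv_int hp hK hV.1 hM hz.1.continuous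
    (fun n => (hg n).1.continuous)
    (tendsto_unif hp hK (h := fun n x => g n x - z x) hg1)
  have t3 := t1.add t2
  rw [energy_on hV hp hz hzK]
  refine ge_of_tendsto t3 (Eventually.of_forall fun n => ?_)
  have := hQ _ (hg n)
  rw [energy_on hV hp (C1c_of_test (hg n)) (hgK n)] at this
  exact this

end PT

namespace PT
variable {d : ℕ}

/-! ### The cutting inequality -/

lemma convex_norm_rpow {p : ℝ} (hp : 1 < p) {t : ℝ} (ht0 : 0 ≤ t) (ht1 : t ≤ 1) (a b : Euc d) :
    ‖(1 - t) • a + t • b‖ ^ p ≤ (1 - t) * ‖a‖ ^ p + t * ‖b‖ ^ p := by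
  have h1 := (convexOn_rpow hp.le).2 (norm_nonneg a) (norm_nonneg b) (sub_nonneg.mpr ht1) ht0
    (by ring)
  simp only [smul_eq_mul] at h1
  refine le_trans ?_ h1
  apply Real.rpow_le_rpow (norm_nonneg _) _ (by linarith)
  refine (norm_add_le _ _).trans ?_
  rw [norm_smul, norm_smul, Real.norm_of_nonneg ht0, Real.norm_of_nonneg (sub_nonneg.mpr ht1)]

/-- glued function -/
def glue (p : ℝ) (η u f : Euc d → ℝ) (x : Euc d) : ℝ :=
  u x + |η x| ^ p * (f x - u x)

def Yv (p : ℝ) (η u f : Euc d → ℝ) (x : Euc d) : Euc d :=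
  η x • gradient f x + (p * (f x - u x)) • gradient η x

lemma glue_C1 {p : ℝ} (hp : 1 < p) {η u f : Euc d → ℝ} (hη : ContDiff ℝ 1 η)
    (hu : ContDiff ℝ 1 u) (hf : ContDiff ℝ 1 f) : ContDiff ℝ 1 (glue p η u f) :=
  hu.add ((contDiff_abs_rpow hp hη).mul (hf.sub hu))

lemma glue_off {p : ℝ} (hp : 1 < p) {η u f : Euc d → ℝ} {x : Euc d} (hx : x ∉ tsupport η) :
    glue p η u f x = u x := by
  simp [glue, image_eq_zero_of_notMem_tsupport hx, Real.zero_rpow (by linarith : p ≠ 0)]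

lemma glue_C1c {Ω : Set (Euc d)} {p : ℝ} (hp : 1 < p) {η u f : Euc d → ℝ} (hη : C1c Ω η)
    (hu : C1c Ω u) (hf : ContDiff ℝ 1 f) : C1c Ω (glue p η u f) := by
  have hs : tsupport (glue p η u f) ⊆ tsupport u ∪ tsupport η := by
    apply closure_minimal _ ((isClosed_tsupport _).union (isClosed_tsupport _))
    intro x hx
    by_contra h
    rw [Set.mem_union, not_or] at h
    exact hx (by rw [glue_off hp h.2, image_eq_zero_of_notMem_tsupport h.1])
  exact ⟨glue_C1 hp hη.1 hu.1 hf,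
    (hu.2.1.union hη.2.1).of_isClosed_subset (isClosed_tsupport _) hs,
    hs.trans (Set.union_subset hu.2.2 hη.2.2)⟩

lemma glue_grad_le {p : ℝ} (hp : 1 < p) {η u f : Euc d → ℝ} (hη : ContDiff ℝ 1 η)
    (hu : ContDiff ℝ 1 u) (hf : ContDiff ℝ 1 f) (h0 : ∀ x, 0 ≤ η x) (h1 : ∀ x, η x ≤ 1)
    (x : Euc d) :
    ‖gradient (glue p η u f) x‖ ^ p ≤ ‖gradient u x‖ ^ p - |η x| ^ p * ‖gradient u x‖ ^ p
      + ‖Yv p η u f x‖ ^ p := by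
  have dη := hη.differentiable one_ne_zero x
  have du := hu.differentiable one_ne_zero x
  have df := hf.differentiable one_ne_zero x
  have dη' := (contDiff_abs_rpow hp hη).differentiable one_ne_zero x
  have e : gradient (glue p η u f) x = gradient u x + (|η x| ^ p • (gradient f x - gradient u x)
      + (f x - u x) • (p * |η x| ^ (p - 2) * η x) • gradient η x) := by
    unfold glue
    have dfu : DifferentiableAt ℝ (fun x => f x - u x) x := df.sub du
    have dm : DifferentiableAt ℝ (fun x => |η x| ^ p * (f x - u x)) x := dη'.mul dfu
    rw [grad_add du dm, grad_mul dη' dfu, grad_sub df du, grad_abs_rpow hp dη]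
  rcases (h0 x).eq_or_lt with h | h
  · rw [e, ← h]
    have := norm_nonneg (Yv p η u f x)
    have : 0 ≤ ‖Yv p η u f x‖ ^ p := by positivity
    simp [Real.zero_rpow (by linarith : p ≠ 0)]
    exact this
  · rw [e, abs_of_pos h]
    set t := η x ^ p with ht
    have ht0 : 0 < t := by positivity
    have ht1 : t ≤ 1 := Real.rpow_le_one (h0 x) (h1 x) (by linarith)
    have e2 : gradient u x + (t • (gradient f x - gradient u x)
      + (f x - u x) • (p * η x ^ (p - 2) * η x) • gradient η x) =
        (1 - t) • gradient u x + t • ((η x)⁻¹ • Yv p η u f x) := by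
      have hh : t * ((η x)⁻¹ * (η x)⁻¹) = η x ^ (p - 2) := by
        rw [ht, ← rpow_sub_two_mul_sq hp h.le]; field_simp
      unfold Yv
      rw [← hh]
      match_scalars <;> field_simp
      ring
    rw [e2]
    refine (convex_norm_rpow hp ht0.le ht1 _ _).trans (le_of_eq ?_)
    rw [norm_smul, norm_inv, Real.norm_of_nonneg h.le, Real.mul_rpow (by positivity) (by positivity),
      Real.inv_rpow h.le, ← ht]
    field_simp

lemma continuous_Yv {p : ℝ} {η u f : Euc d → ℝ} (hη : ContDiff ℝ 1 η)
    (hu : Continuous u) (hf : ContDiff ℝ 1 f) : Continuous (Yv p η u f) := by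
  have := continuous_gradient hη
  have := continuous_gradient hf
  have := hη.continuous
  have := hf.continuous
  unfold Yv
  fun_prop

lemma cut {Ω : Set (Euc d)} (hΩ : IsOpen Ω) {V : Euc d → ℝ} (hV : LocBddPotential Ω V)
    {p : ℝ} (hp : 1 < p) (hQ : ∀ u : Euc d → ℝ, IsTestFun Ω u → 0 ≤ energyQ Ω V p u)
    {η u f : Euc d → ℝ} (hη : C1c Ω η) (h0 : ∀ x, 0 ≤ η x) (h1 : ∀ x, η x ≤ 1)
    (hu : C1c Ω u) (hf : ContDiff ℝ 1 f) :
    ∫ x in tsupport η, |η x| ^ p * ‖gradient u x‖ ^ p ≤ energyQ Ω V p u +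
      (∫ x in tsupport η, ‖Yv p η u f x‖ ^ p) +
      ((∫ x in tsupport η, V x * |glue p η u f x| ^ p) - ∫ x in tsupport η, V x * |u x| ^ p) := by
  have hp0 : p ≠ 0 := by linarith
  have hz := glue_C1c hp hη hu hf
  have hQz := Q_nonneg hΩ hV hp hQ hz
  rw [energy_eq hV hp hz] at hQz
  rw [energy_eq hV hp hu]
  obtain ⟨M, hM⟩ := hV.2 _ hη.2.2 hη.2.1
  have cz := cont_abs_rpow hp hz.1.continuous
  have cu := cont_abs_rpow hp hu.1.continuous
  have eV : (∫ x in tsupport η, V x * |glue p η u f x| ^ p) - ∫ x in tsupport η, V x * |u x| ^ p =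
      (∫ x, V x * |glue p η u f x| ^ p) - ∫ x, V x * |u x| ^ p := by
    rw [← integral_sub (int_V hV hp hz) (int_V hV hp hu),
      ← integral_sub (int_on_V hη.2.1 hV.1 hM cz) (int_on_V hη.2.1 hV.1 hM cu)]
    apply setIntegral_eq_integral_of_forall_compl_eq_zero
    intro x hx
    rw [glue_off hp hx, sub_self]
  rw [eV]
  have hY0 : ∀ x, x ∉ tsupport η → ‖Yv p η u f x‖ ^ p = 0 := fun x hx => by
    simp [Yv, image_eq_zero_of_notMem_tsupport hx, grad_zero hx, Real.zero_rpow hp0]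
  have hE0 : ∀ x, x ∉ tsupport η → |η x| ^ p * ‖gradient u x‖ ^ p = 0 := fun x hx => by
    simp [image_eq_zero_of_notMem_tsupport hx, Real.zero_rpow hp0]
  rw [setIntegral_eq_integral_of_forall_compl_eq_zero hY0,
    setIntegral_eq_integral_of_forall_compl_eq_zero hE0]
  have iY : Integrable (fun x => ‖Yv p η u f x‖ ^ p) := integrable_cc hη.2.1
    ((continuous_Yv hη.1 hu.1.continuous hf).norm.rpow_const (fun _ => Or.inr (by linarith))) hY0
  have iE : Integrable (fun x => |η x| ^ p * ‖gradient u x‖ ^ p) := integrable_cc hη.2.1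
    ((cont_abs_rpow hp hη.1.continuous).mul (cont_grad_rpow hp hu.1)) hE0
  have key : ∫ x, ‖gradient (glue p η u f) x‖ ^ p ≤ (∫ x, ‖gradient u x‖ ^ p)
      - (∫ x, |η x| ^ p * ‖gradient u x‖ ^ p) + ∫ x, ‖Yv p η u f x‖ ^ p := by
    have iS : Integrable (fun x => ‖gradient u x‖ ^ p - |η x| ^ p * ‖gradient u x‖ ^ p) :=
      (int_grad hp hu).sub iE
    rw [← integral_sub (int_grad hp hu) iE, ← integral_add iS iY]
    exact integral_mono (int_grad hp hz) (iS.add iY)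
      (fun x => glue_grad_le hp hη.1 hu.1 hf h0 h1 x)
  linarith

end PT

namespace PT
variable {d : ℕ}

/-! ### Weak convergence of gradients -/

lemma le_add_rpow {p : ℝ} (hp : 1 < p) {s t : ℝ} (hs : 0 < s) (ht : 0 ≤ t) :
    t ≤ s + s ^ (1 - p) * t ^ p := by
  by_cases h : t ≤ s
  · have : 0 ≤ s ^ (1 - p) * t ^ p := by positivity
    linarith
  · push Not at h
    have ht' : 0 < t := hs.trans h
    have h1 : t ^ (1 - p) ≤ s ^ (1 - p) :=
      Real.rpow_le_rpow_of_nonpos hs h.le (by linarith)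
    have h2 : t ^ (1 - p) * t ^ p = t := by
      rw [← Real.rpow_add ht']; simp
    have h3 : t ^ (1 - p) * t ^ p ≤ s ^ (1 - p) * t ^ p := by gcongr
    linarith

lemma tendsto_L1 {p : ℝ} (hp : 1 < p) {K : Set (Euc d)} (hK : IsCompact K)
    {h : ℕ → Euc d → ℝ} (hc : ∀ k, Continuous (h k))
    (hconv : Tendsto (fun k => ∫ x in K, |h k x| ^ p) atTop (𝓝 0)) :
    Tendsto (fun k => ∫ x in K, |h k x|) atTop (𝓝 0) := by
  rw [Metric.tendsto_atTop] at hconv ⊢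
  intro ε hε
  set m := volume.real K
  have hm : 0 ≤ m := measureReal_nonneg
  set s := ε / (2 * (m + 1)) with hs
  have hs0 : 0 < s := by positivity
  have hsp : 0 < s ^ (1 - p) := by positivity
  obtain ⟨N, hN⟩ := hconv (ε / (2 * s ^ (1 - p))) (by positivity)
  refine ⟨N, fun k hk => ?_⟩
  have h1 := hN k hk
  rw [Real.dist_eq, sub_zero, abs_of_nonneg (integral_nonneg fun x => by positivity)] at h1 ⊢
  have hb : ∫ x in K, |h k x| ≤ ∫ x in K, (s + s ^ (1 - p) * |h k x| ^ p) := by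
    apply setIntegral_mono (int_on hK (hc k).abs)
      (int_on hK (continuous_const.add ((cont_abs_rpow hp (hc k)).const_mul _)))
    intro x
    exact le_add_rpow hp hs0 (abs_nonneg _)
  rw [integral_add (int_on hK continuous_const)
    (int_on hK ((cont_abs_rpow hp (hc k)).const_mul _)), integral_const_mul,
    setIntegral_const, smul_eq_mul] at hb
  refine lt_of_le_of_lt hb ?_
  have h2 : s ^ (1 - p) * (∫ x in K, |h k x| ^ p) < ε / 2 := by
    calc _ < s ^ (1 - p) * (ε / (2 * s ^ (1 - p))) := by gcongr
      _ = _ := by field_simp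
  have h3 : m * s ≤ ε / 2 := by
    calc m * s ≤ (m + 1) * s := by gcongr; linarith
      _ = _ := by rw [hs]; field_simp
  linarith

lemma norm_fderiv_apply_le (h : Euc d → ℝ) (x e : Euc d) :
    |fderiv ℝ h x e| ≤ ‖gradient h x‖ * ‖e‖ := by
  have := (fderiv ℝ h x).le_opNorm e
  have e1 : ‖gradient h x‖ = ‖fderiv ℝ h x‖ := by
    rw [gradient, LinearIsometryEquiv.norm_map]
  rw [e1]; exact this

lemma weak0 {p : ℝ} (hp : 1 < p) {Ω : Set (Euc d)} (hΩ : IsOpen Ω) {f : Euc d → ℝ}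
    (hf : Continuous f) (hfc : HasCompactSupport f) (hfs : tsupport f ⊆ Ω)
    {h : ℕ → Euc d → ℝ} (hh : ∀ k, ContDiff ℝ 1 (h k))
    (hconv : ∀ K ⊆ Ω, IsCompact K → Tendsto (fun k => ∫ x in K, |h k x| ^ p) atTop (𝓝 0))
    (hbd : ∀ K ⊆ Ω, IsCompact K → ∃ C, ∀ k, ∫ x in K, ‖gradient (h k) x‖ ^ p ≤ C) (e : Euc d) :
    Tendsto (fun k => ∫ x, f x * fderiv ℝ (h k) x e) atTop (𝓝 0) := by
  obtain ⟨K, hK, hKΩ, hfK, hm⟩ := mollc hΩ hf hfc hfs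
  obtain ⟨C, hC⟩ := hbd K hKΩ hK
  have cder : ∀ k, Continuous (fun x => fderiv ℝ (h k) x e) := fun k =>
    ((hh k).continuous_fderiv one_ne_zero).clm_apply continuous_const
  have cg : ∀ k, Continuous (fun x => ‖gradient (h k) x‖) := fun k => (continuous_gradient (hh k)).norm
  have hA : ∀ k, ∫ x in K, ‖gradient (h k) x‖ ≤ volume.real K + C := by
    intro k
    have : ∫ x in K, ‖gradient (h k) x‖ ≤ ∫ x in K, (1 + ‖gradient (h k) x‖ ^ p) := by
      apply setIntegral_mono (int_on hK (cg k))
        (int_on hK (continuous_const.add (cont_grad_rpow hp (hh k))))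
      intro x
      have := le_add_rpow hp one_pos (norm_nonneg (gradient (h k) x))
      simpa using this
    rw [integral_add (int_on hK continuous_const) (int_on hK (cont_grad_rpow hp (hh k))),
      setIntegral_const, smul_eq_mul, mul_one] at this
    linarith [hC k]
  set A := |volume.real K + C| * ‖e‖ with hAdef
  have hA0 : 0 ≤ A := by positivity
  rw [Metric.tendsto_atTop]
  intro ε hε
  set δ := ε / (2 * (A + 1)) with hδ
  have hδ0 : 0 < δ := by positivity
  obtain ⟨g, hg, hgK, hgf⟩ := hm δ hδ0
  have hg1 := (C1c_of_test hg).1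
  have cgd : Continuous (fun x => fderiv ℝ g x e) :=
    (hg1.continuous_fderiv one_ne_zero).clm_apply continuous_const
  obtain ⟨M, hM⟩ := hK.exists_bound_of_continuousOn cgd.continuousOn
  set M' := |M| + 1
  have hM' : 0 < M' := by positivity
  have hL1 := tendsto_L1 hp hK (fun k => (hh k).continuous) (hconv K hKΩ hK)
  obtain ⟨N, hN⟩ := (Metric.tendsto_atTop.mp hL1) (ε / (2 * M')) (by positivity)
  refine ⟨N, fun k hk => ?_⟩
  have h1 := hN k hk
  rw [Real.dist_eq, sub_zero, abs_of_nonneg (integral_nonneg fun x => by positivity)] at h1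
  rw [Real.dist_eq, sub_zero]
  have g0 : ∀ x, x ∉ K → g x = 0 := fun x hx => image_eq_zero_of_notMem_tsupport (fun h => hx (hgK h))
  have f0 : ∀ x, x ∉ K → f x = 0 := fun x hx => image_eq_zero_of_notMem_tsupport (fun h => hx (hfK h))
  have gd0 : ∀ x, x ∉ K → fderiv ℝ g x e = 0 := fun x hx => by
    rw [← inner_gradient_left, grad_zero (fun h => hx (hgK h)), inner_zero_left]
  have i1 : Integrable (fun x => (f x - g x) * fderiv ℝ (h k) x e) :=
    integrable_cc hK ((hf.sub hg1.continuous).mul (cder k)) (fun x hx => by simp [f0 x hx, g0 x hx])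
  have i2 : Integrable (fun x => g x * fderiv ℝ (h k) x e) :=
    integrable_cc hK (hg1.continuous.mul (cder k)) (fun x hx => by simp [g0 x hx])
  have i3 : Integrable (fun x => fderiv ℝ g x e * h k x) :=
    integrable_cc hK (cgd.mul (hh k).continuous) (fun x hx => by simp [gd0 x hx])
  have i4 : Integrable (fun x => g x * h k x) :=
    integrable_cc hK (hg1.continuous.mul (hh k).continuous) (fun x hx => by simp [g0 x hx])
  have ibp := integral_mul_fderiv_eq_neg_fderiv_mul_of_integrable (v := e) i3 i2 i4
    (fun x _ => hg1.differentiable one_ne_zero x) (fun x _ => (hh k).differentiable one_ne_zero x)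
  have split : ∫ x, f x * fderiv ℝ (h k) x e =
      (∫ x, (f x - g x) * fderiv ℝ (h k) x e) + ∫ x, g x * fderiv ℝ (h k) x e := by
    rw [← integral_add i1 i2]; congr 1; ext x; ring
  have b1 : |∫ x, (f x - g x) * fderiv ℝ (h k) x e| ≤ δ * A := by
    rw [← setIntegral_eq_integral_of_forall_compl_eq_zero (s := K)
      (fun x hx => by simp [f0 x hx, g0 x hx]), ← Real.norm_eq_abs]
    have : ‖∫ x in K, (f x - g x) * fderiv ℝ (h k) x e‖ ≤
        ∫ x in K, (δ * ‖e‖) * ‖gradient (h k) x‖ := by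
      refine norm_integral_le_of_norm_le (int_on hK ((cg k).const_mul _)) ?_
      refine Eventually.of_forall fun x => ?_
      rw [norm_mul, Real.norm_eq_abs, Real.norm_eq_abs, abs_sub_comm]
      have := mul_le_mul (hgf x) (norm_fderiv_apply_le (h k) x e) (abs_nonneg _) hδ0.le
      linarith
    refine this.trans ?_
    rw [integral_const_mul, hAdef, mul_assoc]
    apply mul_le_mul_of_nonneg_left _ hδ0.le
    rw [mul_comm]
    apply mul_le_mul_of_nonneg_right _ (norm_nonneg _)
    exact (hA k).trans (le_abs_self _)
  have b2 : |∫ x, fderiv ℝ g x e * h k x| ≤ M' * ∫ x in K, |h k x| := by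
    rw [← setIntegral_eq_integral_of_forall_compl_eq_zero (s := K)
      (fun x hx => by simp [gd0 x hx]), ← Real.norm_eq_abs, ← integral_const_mul]
    refine norm_integral_le_of_norm_le (int_on hK ((hh k).continuous.abs.const_mul _)) ?_
    filter_upwards [ae_restrict_mem hK.measurableSet] with x hx
    rw [norm_mul, Real.norm_eq_abs (h k x)]
    apply mul_le_mul_of_nonneg_right _ (abs_nonneg _)
    have := hM x hx
    have := le_abs_self M
    simp only [M']; linarith
  have b3 : M' * ∫ x in K, |h k x| < ε / 2 := by
    calc _ < M' * (ε / (2 * M')) := by gcongr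
      _ = _ := by field_simp
  have b4 : δ * A ≤ ε / 2 := by
    calc δ * A ≤ δ * (A + 1) := by gcongr; linarith
      _ = _ := by rw [hδ]; field_simp
  rw [split, ibp]
  calc _ ≤ |∫ x, (f x - g x) * fderiv ℝ (h k) x e| + |-∫ x, fderiv ℝ g x e * h k x| :=
        abs_add_le _ _
    _ < ε := by rw [abs_neg]; linarith

/-- vector version -/
lemma weakF {p : ℝ} (hp : 1 < p) {Ω : Set (Euc d)} (hΩ : IsOpen Ω) {F : Euc d → Euc d}
    (hF : Continuous F) {K : Set (Euc d)} (hK : IsCompact K) (hKΩ : K ⊆ Ω)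
    (hFK : ∀ x, x ∉ K → F x = 0)
    {h : ℕ → Euc d → ℝ} (hh : ∀ k, ContDiff ℝ 1 (h k))
    (hconv : ∀ K ⊆ Ω, IsCompact K → Tendsto (fun k => ∫ x in K, |h k x| ^ p) atTop (𝓝 0))
    (hbd : ∀ K ⊆ Ω, IsCompact K → ∃ C, ∀ k, ∫ x in K, ‖gradient (h k) x‖ ^ p ≤ C) :
    Tendsto (fun k => ∫ x, ⟪F x, gradient (h k) x⟫) atTop (𝓝 0) := by
  have cF : ∀ i, Continuous (fun x => F x i) := fun i => by fun_prop
  have sF : ∀ i, tsupport (fun x => F x i) ⊆ K := fun i => by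
    apply closure_minimal _ hK.isClosed
    intro x hx
    by_contra hxK
    exact hx (by simp [hFK x hxK])
  have key : ∀ i, Tendsto (fun k => ∫ x, F x i * fderiv ℝ (h k) x (EuclideanSpace.single i 1))
      atTop (𝓝 0) := fun i =>
    weak0 hp hΩ (cF i) (hK.of_isClosed_subset (isClosed_tsupport _) (sF i)) ((sF i).trans hKΩ)
      hh hconv hbd _
  have hs := tendsto_finsetSum Finset.univ (fun i _ => key i)
  simp only [Finset.sum_const_zero] at hs
  refine hs.congr fun k => ?_
  rw [← integral_finsetSum]
  · congr 1
    ext x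
    rw [real_inner_comm, inner_gradient_left]
    conv_rhs => rw [← (EuclideanSpace.basisFun (Fin d) ℝ).sum_repr (F x)]
    simp
  · intro i _
    apply integrable_cc hK
      ((cF i).mul (((hh k).continuous_fderiv one_ne_zero).clm_apply continuous_const))
    intro x hx
    simp [hFK x hx]

end PT

namespace PT
variable {d : ℕ}

lemma C1c_ext {Ω K : Set (Euc d)} {f : Euc d → ℝ} (hK : IsCompact K) (hKΩ : K ⊆ Ω)
    (h : ∀ x ∈ Ω, ContDiffAt ℝ 1 f x) (h0 : ∀ x, x ∉ K → f x = 0) : C1c Ω f := by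
  have hs : tsupport f ⊆ K := by
    apply closure_minimal _ hK.isClosed
    intro x hx
    by_contra hh
    exact hx (h0 x hh)
  refine ⟨contDiff_iff_contDiffAt.mpr fun x => ?_,
    hK.of_isClosed_subset (isClosed_tsupport _) hs, hs.trans hKΩ⟩
  by_cases hx : x ∈ tsupport f
  · exact h x (hKΩ (hs hx))
  · have : f =ᶠ[𝓝 x] fun _ => 0 := notMem_tsupport_iff_eventuallyEq.mp hx
    exact contDiffAt_const.congr_of_eventuallyEq this

lemma cutv {Ω : Set (Euc d)} (hΩ : IsOpen Ω) {χ v : Euc d → ℝ} (hχ : C1c Ω χ)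
    (hv : ContDiffOn ℝ 1 v Ω) : C1c Ω (fun x => χ x * v x) := by
  refine C1c_ext hχ.2.1 hχ.2.2 (fun x hx => ?_) (fun x hx => ?_)
  · exact hχ.1.contDiffAt.mul (hv.contDiffAt (hΩ.mem_nhds hx))
  · simp [image_eq_zero_of_notMem_tsupport hx]

lemma conv_dom {F : Type*} [NormedAddCommGroup F]
    {p : ℝ} (hp : 1 < p) {K : Set (Euc d)} (hK : IsCompact K)
    {g : ℕ → Euc d → F} {h : ℕ → Euc d → ℝ} (hg : ∀ k, Continuous (g k))
    (hh : ∀ k, Continuous (h k)) {c : ℝ} (hc : 0 ≤ c)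
    (hb : ∀ k, ∀ x ∈ K, ‖g k x‖ ≤ c * |h k x|)
    (hconv : Tendsto (fun k => ∫ x in K, |h k x| ^ p) atTop (𝓝 0)) :
    Tendsto (fun k => ∫ x in K, ‖g k x‖ ^ p) atTop (𝓝 0) := by
  have h1 := hconv.const_mul (c ^ p)
  rw [mul_zero] at h1
  refine squeeze_zero (fun n => integral_nonneg fun x => by positivity) (fun k => ?_) h1
  rw [← integral_const_mul]
  refine setIntegral_mono_on (int_on hK ?_) (int_on hK ?_) hK.measurableSet (fun x hx => ?_)
  · exact (hg k).norm.rpow_const (fun _ => Or.inr (by linarith))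
  · exact (cont_abs_rpow hp (hh k)).const_mul _
  · rw [← Real.mul_rpow hc (abs_nonneg _)]
    exact Real.rpow_le_rpow (norm_nonneg _) (hb k x hx) (by linarith)

lemma rhs_lim {Ω : Set (Euc d)} {V : Euc d → ℝ} (hV : LocBddPotential Ω V)
    {p : ℝ} (hp : 1 < p)
    {η f w : Euc d → ℝ} (hη : C1c Ω η) (h0 : ∀ x, 0 ≤ η x) (h1 : ∀ x, η x ≤ 1)
    {u : ℕ → Euc d → ℝ} (hu : ∀ k, C1c Ω (u k)) (hf : ContDiff ℝ 1 f) (hw : Continuous w)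
    (hconv : Tendsto (fun k => ∫ x in tsupport η, |u k x - w x| ^ p) atTop (𝓝 0))
    (hE : Tendsto (fun k => energyQ Ω V p (u k)) atTop (𝓝 0)) :
    Tendsto (fun k => energyQ Ω V p (u k) +
      (∫ x in tsupport η, ‖Yv p η (u k) f x‖ ^ p) +
      ((∫ x in tsupport η, V x * |glue p η (u k) f x| ^ p) -
        ∫ x in tsupport η, V x * |u k x| ^ p)) atTop
      (𝓝 ((∫ x in tsupport η, ‖Yv p η w f x‖ ^ p) +
      ((∫ x in tsupport η, V x * |glue p η w f x| ^ p) -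
        ∫ x in tsupport η, V x * |w x| ^ p))) := by
  have hK : IsCompact (tsupport η) := hη.2.1
  obtain ⟨M, hM⟩ := hV.2 _ hη.2.2 hK
  obtain ⟨C, hC⟩ := hK.exists_bound_of_continuousOn (continuous_gradient hη.1).continuousOn
  have hc : ∀ k, Continuous (fun x => u k x - w x) := fun k => (hu k).1.continuous.sub hw
  have hcη : Continuous (fun x => |η x| ^ p) := cont_abs_rpow hp hη.1.continuous
  have cgl : ∀ {z : Euc d → ℝ}, Continuous z → Continuous (glue p η z f) := fun hz =>
    hz.add (hcη.mul (hf.continuous.sub hz))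
  have t1 : Tendsto (fun k => ∫ x in tsupport η, ‖Yv p η (u k) f x‖ ^ p) atTop
      (𝓝 (∫ x in tsupport η, ‖Yv p η w f x‖ ^ p)) := by
    refine conv_int1 hp hK (continuous_Yv hη.1 hw hf)
      (fun k => continuous_Yv hη.1 (hu k).1.continuous hf) ?_
    refine conv_dom hp hK (fun k => (continuous_Yv hη.1 (hu k).1.continuous hf).sub
      (continuous_Yv hη.1 hw hf)) hc (c := p * max C 0) (by positivity) (fun k x hx => ?_) hconv
    have : Yv p η (u k) f x - Yv p η w f x = (-(p * (u k x - w x))) • gradient η x := by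
      unfold Yv; module
    rw [this, norm_smul, norm_neg, norm_mul, Real.norm_of_nonneg (by linarith : 0 ≤ p),
      Real.norm_eq_abs]
    have h2 := (hC x hx).trans (le_max_left C 0)
    calc p * |u k x - w x| * ‖gradient η x‖ ≤ p * |u k x - w x| * max C 0 := by gcongr
      _ = _ := by ring
  have t2 : Tendsto (fun k => ∫ x in tsupport η, V x * |glue p η (u k) f x| ^ p) atTop
      (𝓝 (∫ x in tsupport η, V x * |glue p η w f x| ^ p)) := by
    refine conv_int hp hK hV.1 hM (cgl hw) (fun k => cgl (hu k).1.continuous) ?_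
    refine conv_dom hp hK (fun k => (cgl (hu k).1.continuous).sub (cgl hw)) hc (c := 1)
      (by norm_num) (fun k x hx => ?_) hconv
    have e : glue p η (u k) f x - glue p η w f x = (1 - |η x| ^ p) * (u k x - w x) := by
      unfold glue; ring
    have hb0 : 0 ≤ |η x| ^ p := by positivity
    have hb1 : |η x| ^ p ≤ 1 := Real.rpow_le_one (abs_nonneg _)
      (by rw [abs_of_nonneg (h0 x)]; exact h1 x) (by linarith)
    rw [e, Real.norm_eq_abs, abs_mul]
    gcongr
    rw [abs_le]; constructor <;> linarith
  have t3 : Tendsto (fun k => ∫ x in tsupport η, V x * |u k x| ^ p) atTop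
      (𝓝 (∫ x in tsupport η, V x * |w x| ^ p)) :=
    conv_int hp hK hV.1 hM hw (fun k => (hu k).1.continuous) hconv
  have := (hE.add t1).add (t2.sub t3)
  simpa using this

/-- local gradient bounds for the null sequence -/
lemma grad_bdd {Ω : Set (Euc d)} (hΩ : IsOpen Ω) {V : Euc d → ℝ} (hV : LocBddPotential Ω V)
    {p : ℝ} (hp : 1 < p) (hQ : ∀ u : Euc d → ℝ, IsTestFun Ω u → 0 ≤ energyQ Ω V p u)
    {v : Euc d → ℝ} (hv : ContDiffOn ℝ 1 v Ω)
    {u : ℕ → Euc d → ℝ} (hu : ∀ k, C1c Ω (u k))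
    (hconv : ∀ K ⊆ Ω, IsCompact K → Tendsto (fun k => ∫ x in K, |u k x - v x| ^ p) atTop (𝓝 0))
    (hE : Tendsto (fun k => energyQ Ω V p (u k)) atTop (𝓝 0))
    {K : Set (Euc d)} (hKΩ : K ⊆ Ω) (hK : IsCompact K) :
    ∃ C, ∀ k, ∫ x in K, ‖gradient (u k) x‖ ^ p ≤ C := by
  obtain ⟨η, hη, h0, h1, hone⟩ := exists_cutoff hΩ hK hKΩ
  obtain ⟨χ, hχ, -, -, honeχ⟩ := exists_cutoff hΩ hη.2.1 hη.2.2
  have hη1 := C1c_of_test hη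
  have hw := cutv hΩ (C1c_of_test hχ) hv
  have hc' : Tendsto (fun k => ∫ x in tsupport η, |u k x - χ x * v x| ^ p) atTop (𝓝 0) := by
    refine (hconv _ hη.2.2 hη.2.1).congr fun k => ?_
    refine setIntegral_congr_fun (isClosed_tsupport η).measurableSet (fun x hx => ?_)
    simp [honeχ.self_of_nhdsSet x hx]
  have hl := rhs_lim hV hp hη1 h0 h1 hu (f := fun _ => 0) contDiff_const hw.1.continuous hc' hE
  obtain ⟨C, hC⟩ := hl.bddAbove_range
  refine ⟨C, fun k => ?_⟩
  refine le_trans ?_ (hC ⟨k, rfl⟩)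
  refine le_trans ?_ (cut hΩ hV hp hQ hη1 h0 h1 (hu k) contDiff_const)
  have hKT : K ⊆ tsupport η := fun x hx => subset_tsupport _ (by
    simp [hone.self_of_nhdsSet x hx])
  calc ∫ x in K, ‖gradient (u k) x‖ ^ p = ∫ x in K, |η x| ^ p * ‖gradient (u k) x‖ ^ p := by
        refine setIntegral_congr_fun hK.measurableSet (fun x hx => ?_)
        simp [hone.self_of_nhdsSet x hx]
    _ ≤ _ := by
        refine setIntegral_mono_set (int_on hη1.2.1 ?_) ?_ hKT.eventuallyLE
        · exact (cont_abs_rpow hp hη1.1.continuous).mul (cont_grad_rpow hp (hu k).1)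
        · exact Eventually.of_forall fun x => by positivity
end PT

namespace PT
variable {d : ℕ}

lemma min_ineq {Ω : Set (Euc d)} (hΩ : IsOpen Ω) {V : Euc d → ℝ} (hV : LocBddPotential Ω V)
    {p : ℝ} (hp : 1 < p) (hQ : ∀ u : Euc d → ℝ, IsTestFun Ω u → 0 ≤ energyQ Ω V p u)
    {v : Euc d → ℝ} (hv : ContDiffOn ℝ 1 v Ω)
    {u : ℕ → Euc d → ℝ} (hu : ∀ k, C1c Ω (u k))
    (hconv : ∀ K ⊆ Ω, IsCompact K → Tendsto (fun k => ∫ x in K, |u k x - v x| ^ p) atTop (𝓝 0))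
    (hE : Tendsto (fun k => energyQ Ω V p (u k)) atTop (𝓝 0))
    {φ η χ : Euc d → ℝ} (hφ : C1c Ω φ) (hη : C1c Ω η) (h0 : ∀ x, 0 ≤ η x) (h1 : ∀ x, η x ≤ 1)
    (hone : ∀ᶠ x in 𝓝ˢ (tsupport φ), η x = 1)
    (hχ : C1c Ω χ) (honeχ : ∀ᶠ x in 𝓝ˢ (tsupport η), χ x = 1) (t : ℝ) :
    (∫ x in tsupport η, |η x| ^ p * ‖gradient (fun y => χ y * v y) x‖ ^ p)
      + (∫ x in tsupport η, V x * |χ x * v x| ^ p) ≤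
    (∫ x in tsupport η, |η x| ^ p * ‖gradient (fun y => χ y * v y) x + t • gradient φ x‖ ^ p)
      + ∫ x in tsupport η, V x * |χ x * v x + t * φ x| ^ p := by
  set w : Euc d → ℝ := fun y => χ y * v y with hwdef
  have hw : C1c Ω w := cutv hΩ hχ hv
  set T := tsupport η with hT
  have hTc : IsCompact T := hη.2.1
  set f : Euc d → ℝ := fun y => w y + t * φ y with hfdef
  have hf : ContDiff ℝ 1 f := hw.1.add (contDiff_const.mul hφ.1)
  have hc' : Tendsto (fun k => ∫ x in T, |u k x - w x| ^ p) atTop (𝓝 0) := by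
    refine (hconv _ hη.2.2 hη.2.1).congr fun k => ?_
    refine setIntegral_congr_fun hTc.measurableSet (fun x hx => ?_)
    simp [hwdef, honeχ.self_of_nhdsSet x hx]
  have hl := rhs_lim hV hp hη h0 h1 hu hf hw.1.continuous hc' hE
  set Ω1 : Set (Euc d) := interior {x | χ x = 1} ∩ Ω with hΩ1
  have hΩ1_o : IsOpen Ω1 := isOpen_interior.inter hΩ
  have hTΩ1 : T ⊆ Ω1 := fun x hx => ⟨by
    rw [mem_interior_iff_mem_nhds]
    exact (eventually_nhdsSet_iff_forall.mp honeχ) x hx, hη.2.2 hx⟩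
  set F : Euc d → Euc d := fun x => |η x| ^ p • (‖gradient w x‖ ^ (p - 2) • gradient w x) with hF
  have cF : Continuous F := (cont_abs_rpow hp hη.1.continuous).smul
    ((continuous_dual p hp).comp (continuous_gradient hw.1))
  have hw0 := weakF hp hΩ1_o cF hTc hTΩ1 (fun x hx => by
      simp [hF, image_eq_zero_of_notMem_tsupport hx, Real.zero_rpow (by linarith : p ≠ 0)])
    (h := fun k x => u k x - w x) (fun k => (hu k).1.sub hw.1)
    (fun K hK hKc => by
      refine (hconv K (fun x hx => (hK hx).2) hKc).congr fun k => ?_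
      refine setIntegral_congr_fun hKc.measurableSet (fun x hx => ?_)
      have : x ∈ {x | χ x = 1} := interior_subset (hK hx).1
      rw [Set.mem_ofPred_eq] at this
      simp [hwdef, this])
    (fun K hK hKc => by
      obtain ⟨C, hC⟩ := grad_bdd hΩ hV hp hQ hv hu hconv hE (fun x hx => (hK hx).2) hKc
      refine ⟨2 ^ p * (C + ∫ x in K, ‖gradient w x‖ ^ p), fun k => ?_⟩
      have i1 := int_on hKc (cont_grad_rpow hp (hu k).1)
      have i2 := int_on hKc (cont_grad_rpow hp hw.1)
      calc ∫ x in K, ‖gradient (fun x => u k x - w x) x‖ ^ p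
          ≤ ∫ x in K, 2 ^ p * (‖gradient (u k) x‖ ^ p + ‖gradient w x‖ ^ p) := by
            refine setIntegral_mono_on (int_on hKc (cont_grad_rpow hp ((hu k).1.sub hw.1)))
              ((i1.add i2).const_mul _) hKc.measurableSet (fun x hx => ?_)
            rw [grad_sub ((hu k).1.differentiable one_ne_zero x)
              (hw.1.differentiable one_ne_zero x)]
            refine le_trans ?_ (add_rpow_le hp (norm_nonneg _) (norm_nonneg _))
            exact Real.rpow_le_rpow (norm_nonneg _) (norm_sub_le _ _) (by linarith)
        _ = 2 ^ p * ((∫ x in K, ‖gradient (u k) x‖ ^ p) + ∫ x in K, ‖gradient w x‖ ^ p) := by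
            rw [integral_const_mul, integral_add i1 i2]
        _ ≤ _ := by gcongr; exact hC k)
  have hlow := (hw0.const_mul p).const_add (∫ x in T, |η x| ^ p * ‖gradient w x‖ ^ p)
  have key := le_of_tendsto_of_tendsto' hlow hl (fun k => by
    refine le_trans ?_ (cut hΩ hV hp hQ hη h0 h1 (hu k) hf)
    have cg := continuous_gradient ((hu k).1.sub hw.1)
    have e1 : ∫ x, ⟪F x, gradient (fun x => u k x - w x) x⟫
        = ∫ x in T, ⟪F x, gradient (fun x => u k x - w x) x⟫ := by
      symm
      apply setIntegral_eq_integral_of_forall_compl_eq_zero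
      intro x hx
      simp [hF, image_eq_zero_of_notMem_tsupport hx, Real.zero_rpow (by linarith : p ≠ 0)]
    have i1 : IntegrableOn (fun x => |η x| ^ p * ‖gradient w x‖ ^ p) T :=
      int_on hTc ((cont_abs_rpow hp hη.1.continuous).mul (cont_grad_rpow hp hw.1))
    have i2 : IntegrableOn (fun x => p * ⟪F x, gradient (fun x => u k x - w x) x⟫) T :=
      (int_on hTc (cF.inner cg)).const_mul p
    rw [e1, ← integral_const_mul, ← integral_add i1 i2]
    refine setIntegral_mono_on (i1.add i2) (int_on hTc
      ((cont_abs_rpow hp hη.1.continuous).mul (cont_grad_rpow hp (hu k).1)))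
      hTc.measurableSet (fun x hx => ?_)
    have hL := Lag_nonneg hp (gradient w x) (gradient (u k) x - gradient w x)
    rw [grad_sub ((hu k).1.differentiable one_ne_zero x)
              (hw.1.differentiable one_ne_zero x)]
    simp only [hF, real_inner_smul_left]
    unfold Lag at hL
    rw [add_sub_cancel] at hL
    have hn : 0 ≤ |η x| ^ p := by positivity
    nlinarith [mul_nonneg hn hL])
  have r1 : ∫ x in T, ‖Yv p η w f x‖ ^ p =
      ∫ x in T, |η x| ^ p * ‖gradient w x + t • gradient φ x‖ ^ p := by
    refine setIntegral_congr_fun hTc.measurableSet (fun x hx => ?_)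
    have g1 : gradient f x = gradient w x + t • gradient φ x := by
      rw [hfdef, grad_add (hw.1.differentiable one_ne_zero x)
        ((hφ.1.differentiable one_ne_zero x).const_mul t),
        grad_const_mul t (hφ.1.differentiable one_ne_zero x)]
    have g2 : Yv p η w f x = η x • (gradient w x + t • gradient φ x) := by
      unfold Yv
      rw [g1]
      by_cases hx' : x ∈ tsupport φ
      · have : η =ᶠ[𝓝 x] fun _ => 1 := (eventually_nhdsSet_iff_forall.mp hone) x hx'
        rw [this.gradient_eq]; simp [gradient]
      · simp [hfdef, image_eq_zero_of_notMem_tsupport hx']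
    rw [g2, norm_smul, Real.mul_rpow (norm_nonneg _) (norm_nonneg _), Real.norm_eq_abs]
  have r2 : ∫ x in T, V x * |glue p η w f x| ^ p = ∫ x in T, V x * |f x| ^ p := by
    refine setIntegral_congr_fun hTc.measurableSet (fun x hx => ?_)
    have : glue p η w f x = f x := by
      unfold glue
      by_cases hx' : x ∈ tsupport φ
      · simp [hone.self_of_nhdsSet x hx']
      · simp [hfdef, image_eq_zero_of_notMem_tsupport hx']
    simp only [this]
  rw [r1, r2] at key
  simp only [mul_zero, add_zero] at key
  linarith

lemma deriv_J {E : Type*} [NormedAddCommGroup E] [InnerProductSpace ℝ E] [FiniteDimensional ℝ E]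
    {p : ℝ} (hp : 1 < p) {K : Set (Euc d)} (hK : IsCompact K) {V : Euc d → ℝ} (hVm : Measurable V)
    {M : ℝ} (hM : ∀ x ∈ K, |V x| ≤ M) {a b : Euc d → E} (ha : Continuous a) (hb : Continuous b) :
    HasDerivAt (fun t : ℝ => ∫ x in K, V x * ‖a x + t • b x‖ ^ p)
      (∫ x in K, V x * (p * ⟪‖a x‖ ^ (p - 2) • a x, b x⟫)) 0 := by
  have cd := continuous_dual (E := E) p hp
  have cJ : Continuous (fun z : ℝ × Euc d =>
      p * ⟪‖a z.2 + z.1 • b z.2‖ ^ (p - 2) • (a z.2 + z.1 • b z.2), b z.2⟫) := by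
    have c1 : Continuous (fun z : ℝ × Euc d => a z.2 + z.1 • b z.2) := by fun_prop
    exact continuous_const.mul ((cd.comp c1).inner (hb.comp continuous_snd))
  obtain ⟨C, hC⟩ := ((isCompact_Icc (a := (-1:ℝ)) (b := 1)).prod hK).exists_bound_of_continuousOn
    cJ.continuousOn
  have cx : ∀ t : ℝ, Continuous (fun x => ‖a x + t • b x‖ ^ p) := fun t =>
    (by fun_prop : Continuous (fun x => a x + t • b x)).norm.rpow_const
      (fun _ => Or.inr (by linarith))
  have := hasDerivAt_integral_of_dominated_loc_of_deriv_le (μ := volume.restrict K)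
    (F := fun (t : ℝ) x => V x * ‖a x + t • b x‖ ^ p)
    (F' := fun (t : ℝ) x => V x * (p * ⟪‖a x + t • b x‖ ^ (p - 2) • (a x + t • b x), b x⟫))
    (x₀ := (0:ℝ)) (s := Set.Icc (-1) 1) (bound := fun _ => M * C)
    (Icc_mem_nhds (by norm_num) (by norm_num))
    (Eventually.of_forall fun t => (int_on_V hK hVm hM (cx t)).aestronglyMeasurable)
    (int_on_V hK hVm hM (cx 0))
    (int_on_V hK hVm hM (cJ.comp (by fun_prop : Continuous (fun x : Euc d => ((0:ℝ), x))))).aestronglyMeasurable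
    ?_ ?_ ?_
  · simpa using this.2
  · filter_upwards [ae_restrict_mem hK.measurableSet] with x hx t ht
    rw [norm_mul]
    exact mul_le_mul (hM x hx) (hC (t, x) ⟨ht, hx⟩) (norm_nonneg _) ((abs_nonneg _).trans (hM x hx))
  · exact (integrableOn_const (hs := hK.measure_lt_top.ne))
  · refine Eventually.of_forall fun x t ht => ?_
    apply HasDerivAt.const_mul
    have h1 : HasDerivAt (fun t : ℝ => a x + t • b x) (b x) t := by
      simpa using ((hasDerivAt_id t).smul_const (b x)).const_add (a x)
    have h2 := (hasFDerivAt_norm_rpow (a x + t • b x) hp).comp_hasDerivAt t h1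
    have e : ((p * ‖a x + t • b x‖ ^ (p - 2)) • (innerSL ℝ) (a x + t • b x)) (b x) =
        p * ⟪‖a x + t • b x‖ ^ (p - 2) • (a x + t • b x), b x⟫ := by
      rw [real_inner_smul_left, smul_apply, innerSL_apply_apply, smul_eq_mul,
        mul_assoc]
    rw [e] at h2
    exact h2

/-- `v` is a weak solution -/
lemma weak_sol {Ω : Set (Euc d)} (hΩ : IsOpen Ω) {V : Euc d → ℝ} (hV : LocBddPotential Ω V)
    {p : ℝ} (hp : 1 < p) (hQ : ∀ u : Euc d → ℝ, IsTestFun Ω u → 0 ≤ energyQ Ω V p u)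
    {v : Euc d → ℝ} (hv : IsGroundState Ω V p v) {φ : Euc d → ℝ} (hφ : C1c Ω φ) :
    (∫ x in tsupport φ, ⟪‖gradient v x‖ ^ (p - 2) • gradient v x, gradient φ x⟫) +
      (∫ x in tsupport φ, V x * (v x ^ (p - 1) * φ x)) = 0 := by
  obtain ⟨hv1, hvpos, u, ⟨hu, -, B, -, -, -, -, hE⟩, hconv⟩ := hv
  obtain ⟨η, hη, h0, h1, hone⟩ := exists_cutoff hΩ hφ.2.1 hφ.2.2
  obtain ⟨χ, hχ, -, -, honeχ⟩ := exists_cutoff hΩ hη.2.1 hη.2.2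
  have hmin := min_ineq hΩ hV hp hQ hv1 (fun k => C1c_of_test (hu k)) hconv hE hφ
    (C1c_of_test hη) h0 h1 hone (C1c_of_test hχ) honeχ
  have hw := cutv hΩ (C1c_of_test hχ) hv1
  obtain ⟨M, hM⟩ := hV.2 _ hη.2.2 hη.2.1
  have cη := cont_abs_rpow hp (C1c_of_test hη).1.continuous
  have D1 := deriv_J hp hη.2.1 cη.measurable (M := 1) (fun x _ => by
    rw [abs_of_nonneg (by positivity)]
    exact Real.rpow_le_one (abs_nonneg _)
      (by rw [abs_of_nonneg (h0 x)]; exact h1 x) (by linarith))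
    (continuous_gradient hw.1) (continuous_gradient hφ.1)
  have D2 := deriv_J hp hη.2.1 hV.1 hM hw.1.continuous hφ.1.continuous
  have hz := IsLocalMin.hasDerivAt_eq_zero (Eventually.of_forall fun t => by
    simpa using hmin t) (D1.add D2)
  have hφη : tsupport φ ⊆ tsupport η := fun x hx => subset_tsupport _ (by
    simp [hone.self_of_nhdsSet x hx])
  have hχ1 : ∀ x ∈ tsupport φ, χ =ᶠ[𝓝 x] fun _ => 1 := fun x hx =>
    (eventually_nhdsSet_iff_forall.mp honeχ) x (hφη hx)
  have e1 : (∫ x in tsupport η, |η x| ^ p * (p * ⟪‖gradient (fun y => χ y * v y) x‖ ^ (p - 2) •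
      gradient (fun y => χ y * v y) x, gradient φ x⟫)) =
      p * ∫ x in tsupport φ, ⟪‖gradient v x‖ ^ (p - 2) • gradient v x, gradient φ x⟫ := by
    rw [← integral_const_mul]
    symm
    rw [setIntegral_eq_of_subset_of_forall_sdiff_eq_zero (isClosed_tsupport _).measurableSet hφη
      (f := fun x => |η x| ^ p * (p * ⟪‖gradient (fun y => χ y * v y) x‖ ^ (p - 2) •
      gradient (fun y => χ y * v y) x, gradient φ x⟫))]
    · refine setIntegral_congr_fun (isClosed_tsupport _).measurableSet (fun x hx => ?_)
      have : (fun y => χ y * v y) =ᶠ[𝓝 x] v := by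
        filter_upwards [hχ1 x hx] with y hy
        rw [hy, one_mul]
      simp [hone.self_of_nhdsSet x hx, this.gradient_eq]
    · intro x hx
      simp [grad_zero hx.2]
  have e2 : (∫ x in tsupport η, V x * (p * ⟪‖χ x * v x‖ ^ (p - 2) • (χ x * v x), φ x⟫)) =
      p * ∫ x in tsupport φ, V x * (v x ^ (p - 1) * φ x) := by
    rw [← integral_const_mul]
    symm
    rw [setIntegral_eq_of_subset_of_forall_sdiff_eq_zero (isClosed_tsupport _).measurableSet hφη
      (f := fun x => V x * (p * ⟪‖χ x * v x‖ ^ (p - 2) • (χ x * v x), φ x⟫))]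
    · refine setIntegral_congr_fun (isClosed_tsupport _).measurableSet (fun x hx => ?_)
      have hvx := hvpos x (hφ.2.2 hx)
      have e3 : v x ^ (p - 1) = v x ^ (p - 2) * v x := by
        rw [← Real.rpow_add_one hvx.ne']; congr 1; ring
      simp only [(hχ1 x hx).self_of_nhds, one_mul, Real.norm_of_nonneg hvx.le, e3, smul_eq_mul]
      simp
      ring
    · intro x hx
      simp [image_eq_zero_of_notMem_tsupport hx.2]
  rw [e1, e2, ← mul_add] at hz
  exact (mul_eq_zero.mp hz).resolve_left (by linarith)
end PT

namespace PT
variable {d : ℕ}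

lemma continuousOn_grad {Ω : Set (Euc d)} (hΩ : IsOpen Ω) {v : Euc d → ℝ}
    (hv : ContDiffOn ℝ 1 v Ω) : ContinuousOn (gradient v) Ω :=
  (InnerProductSpace.toDual ℝ (Euc d)).symm.continuous.comp_continuousOn
    (hv.continuousOn_fderiv_of_isOpen hΩ le_rfl)

lemma quot_C1c {Ω : Set (Euc d)} (hΩ : IsOpen Ω) {u v : Euc d → ℝ} (hu : C1c Ω u)
    (hv : ContDiffOn ℝ 1 v Ω) (hpos : ∀ x ∈ Ω, 0 < v x) : C1c Ω (fun x => u x / v x) := by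
  refine C1c_ext hu.2.1 hu.2.2 (fun x hx => ?_) (fun x hx => ?_)
  · exact hu.1.contDiffAt.div (hv.contDiffAt (hΩ.mem_nhds hx)) (hpos x hx).ne'
  · simp [image_eq_zero_of_notMem_tsupport hx]

lemma picone_eq {Ω : Set (Euc d)} (hΩ : IsOpen Ω) {V : Euc d → ℝ} (hV : LocBddPotential Ω V)
    {p : ℝ} (hp : 1 < p) (hQ : ∀ u : Euc d → ℝ, IsTestFun Ω u → 0 ≤ energyQ Ω V p u)
    {v : Euc d → ℝ} (hv : IsGroundState Ω V p v) {u : Euc d → ℝ} (hu : C1c Ω u) :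
    energyQ Ω V p u = ∫ x in tsupport u, Lag p ((u x / v x) • gradient v x)
      (v x • gradient (fun y => u y / v y) x) := by
  have hv1 := hv.1
  have hpos := hv.2.1
  have hp0 : p ≠ 0 := by linarith
  set w : Euc d → ℝ := fun y => u y / v y with hwdef
  have hw : C1c Ω w := quot_C1c hΩ hu hv1 hpos
  have hws : ∀ x, x ∉ tsupport u → w x = 0 := fun x hx => by
    simp [hwdef, image_eq_zero_of_notMem_tsupport hx]
  have hχ : C1c Ω (fun x => |w x| ^ p) := C1c_ext hu.2.1 hu.2.2
    (fun x _ => (contDiff_abs_rpow hp hw.1).contDiffAt) (fun x hx => by simp [hws x hx, hp0])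
  set φ : Euc d → ℝ := fun x => |w x| ^ p * v x with hφdef
  have hφ : C1c Ω φ := cutv hΩ hχ hv1
  have hφK : tsupport φ ⊆ tsupport u := by
    apply closure_minimal _ (isClosed_tsupport _)
    intro x hx
    by_contra h
    exact hx (by simp [hφdef, hws x h, hp0])
  have hws := weak_sol hΩ hV hp hQ hv hφ
  have e1 := setIntegral_eq_of_subset_of_forall_sdiff_eq_zero (μ := volume)
    (isClosed_tsupport u).measurableSet hφK
    (f := fun x => ⟪‖gradient v x‖ ^ (p - 2) • gradient v x, gradient φ x⟫)
    (fun x hx => by simp [grad_zero hx.2])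
  have e2 := setIntegral_eq_of_subset_of_forall_sdiff_eq_zero (μ := volume)
    (isClosed_tsupport u).measurableSet hφK
    (f := fun x => V x * (v x ^ (p - 1) * φ x))
    (fun x hx => by simp [image_eq_zero_of_notMem_tsupport hx.2])
  rw [← e1, ← e2] at hws
  have e3 : ∫ x in tsupport u, V x * (v x ^ (p - 1) * φ x) = ∫ x in tsupport u, V x * |u x| ^ p := by
    refine setIntegral_congr_fun (isClosed_tsupport _).measurableSet (fun x hx => ?_)
    have hvx := hpos x (hu.2.2 hx)
    have : |u x| ^ p = v x ^ (p - 1) * φ x := by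
      have h1 : |u x| = |w x| * v x := by
        simp only [hwdef]; rw [abs_div, abs_of_pos hvx]; field_simp
      rw [h1, Real.mul_rpow (abs_nonneg _) hvx.le]
      simp only [hφdef]
      have : v x ^ p = v x ^ (p - 1) * v x := by
        rw [← Real.rpow_add_one hvx.ne']; congr 1; ring
      rw [this]; ring
    simp only [this]
  have cgv := (continuousOn_grad hΩ hv1).mono hu.2.2
  have cin : ContinuousOn (fun x => ⟪‖gradient v x‖ ^ (p - 2) • gradient v x, gradient φ x⟫)
      (tsupport u) :=
    ((continuous_dual p hp).comp_continuousOn cgv).inner (continuous_gradient hφ.1).continuousOn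
  have hfin : energyQ Ω V p u = ∫ x in tsupport u, (‖gradient u x‖ ^ p -
      ⟪‖gradient v x‖ ^ (p - 2) • gradient v x, gradient φ x⟫) := by
    rw [integral_sub (int_on hu.2.1 (cont_grad_rpow hp hu.1)) (cin.integrableOn_compact hu.2.1),
      energy_on hV hp hu subset_rfl, ← e3]
    linarith
  rw [hfin]
  refine setIntegral_congr_fun (isClosed_tsupport _).measurableSet (fun x hx => ?_)
  have hxΩ := hu.2.2 hx
  have hvx := hpos x hxΩ
  have dv : DifferentiableAt ℝ v x := (hv1.contDiffAt (hΩ.mem_nhds hxΩ)).differentiableAt one_ne_zero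
  have dw : DifferentiableAt ℝ w x := hw.1.differentiable one_ne_zero x
  have dχ : DifferentiableAt ℝ (fun x => |w x| ^ p) x := hχ.1.differentiable one_ne_zero x
  have gu : gradient u x = w x • gradient v x + v x • gradient w x := by
    rw [← grad_mul dw dv]
    have : u =ᶠ[𝓝 x] fun y => w y * v y := by
      filter_upwards [hΩ.mem_nhds hxΩ] with y hy
      simp only [hwdef]
      have := hpos y hy
      field_simp
    exact this.gradient_eq
  have gφ : gradient φ x = |w x| ^ p • gradient v x +
      v x • ((p * |w x| ^ (p - 2) * w x) • gradient w x) := by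
    rw [hφdef, grad_mul dχ dv, grad_abs_rpow hp dw]
  change ‖gradient u x‖ ^ p - _ = Lag p (w x • gradient v x) (v x • gradient w x)
  unfold Lag
  rw [← gu, gφ]
  have n1 : ‖w x • gradient v x‖ ^ p = |w x| ^ p * ‖gradient v x‖ ^ p := by
    rw [norm_smul, Real.mul_rpow (norm_nonneg _) (norm_nonneg _), Real.norm_eq_abs]
  have n2 : ‖w x • gradient v x‖ ^ (p - 2) = |w x| ^ (p - 2) * ‖gradient v x‖ ^ (p - 2) := by
    rw [norm_smul, Real.mul_rpow (norm_nonneg _) (norm_nonneg _), Real.norm_eq_abs]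
  have n3 := rpow_sub_two_mul_sq hp (norm_nonneg (gradient v x))
  rw [n1, n2]
  simp only [inner_add_right, real_inner_smul_left, real_inner_smul_right,
    real_inner_self_eq_norm_mul_norm]
  linear_combination (-|w x| ^ p) * n3

lemma picone_le {Ω : Set (Euc d)} (hΩ : IsOpen Ω) {V : Euc d → ℝ} (hV : LocBddPotential Ω V)
    {p : ℝ} (hp : 1 < p) (hQ : ∀ u : Euc d → ℝ, IsTestFun Ω u → 0 ≤ energyQ Ω V p u)
    {v : Euc d → ℝ} (hv : IsGroundState Ω V p v) {u : Euc d → ℝ} (hu : C1c Ω u)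
    {K : Set (Euc d)} (hKΩ : K ⊆ Ω) (hK : IsCompact K) :
    IntegrableOn (fun x => Lag p ((u x / v x) • gradient v x)
      (v x • gradient (fun y => u y / v y) x)) K ∧
    ∫ x in K, Lag p ((u x / v x) • gradient v x)
      (v x • gradient (fun y => u y / v y) x) ≤ energyQ Ω V p u := by
  have hw := quot_C1c hΩ hu hv.1 hv.2.1
  have cL : ContinuousOn (fun x => Lag p ((u x / v x) • gradient v x)
      (v x • gradient (fun y => u y / v y) x)) Ω := by
    have c1 := continuousOn_grad hΩ hv.1
    refine (continuous_Lag hp).comp_continuousOn (f := fun x => ((u x / v x) • gradient v x,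
      v x • gradient (fun y => u y / v y) x)) ?_
    exact (hw.1.continuous.continuousOn.smul c1).prodMk
      (hv.1.continuousOn.smul (continuous_gradient hw.1).continuousOn)
  have hU : K ∪ tsupport u ⊆ Ω := Set.union_subset hKΩ hu.2.2
  have hi := (cL.mono hU).integrableOn_compact (μ := volume) (hK.union hu.2.1)
  refine ⟨(cL.mono hKΩ).integrableOn_compact hK, ?_⟩
  rw [picone_eq hΩ hV hp hQ hv hu]
  refine (setIntegral_mono_set hi (Eventually.of_forall fun x => Lag_nonneg hp _ _)
    (Set.subset_union_left (t := tsupport u)).eventuallyLE).trans (le_of_eq ?_)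
  refine setIntegral_eq_of_subset_of_forall_sdiff_eq_zero
    (hK.union hu.2.1).measurableSet Set.subset_union_right (fun x hx => ?_)
  have hx2 := hx.2
  have h1 : (fun y => u y / v y) =ᶠ[𝓝 x] fun _ => 0 := by
    filter_upwards [notMem_tsupport_iff_eventuallyEq.mp hx2] with y hy
    simp [hy]
  rw [h1.gradient_eq, image_eq_zero_of_notMem_tsupport hx2]
  simp [gradient, Lag]

lemma grad_est {Ω : Set (Euc d)} (hΩ : IsOpen Ω) {V : Euc d → ℝ} (hV : LocBddPotential Ω V)
    {p : ℝ} (hp : 1 < p) (hQ : ∀ u : Euc d → ℝ, IsTestFun Ω u → 0 ≤ energyQ Ω V p u)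
    {v : Euc d → ℝ} (hv : IsGroundState Ω V p v)
    {K : Set (Euc d)} (hKΩ : K ⊆ Ω) (hK : IsCompact K) {ε : ℝ} (hε : 0 < ε) :
    ∃ C > 0, ∀ u : Euc d → ℝ, IsTestFun Ω u →
      ∫ x in K, ‖gradient (fun y => u y / v y) x‖ ^ p ≤
        C * energyQ Ω V p u + ε * ∫ x in K, |u x / v x| ^ p := by
  obtain ⟨m, hm, hmv⟩ : ∃ m > 0, ∀ x ∈ K, m ≤ v x := by
    rcases K.eq_empty_or_nonempty with rfl | hne
    · exact ⟨1, one_pos, by simp⟩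
    · obtain ⟨x, hx, hmin⟩ := hK.exists_isMinOn hne (hv.1.continuousOn.mono hKΩ)
      exact ⟨v x, hv.2.1 x (hKΩ hx), fun y hy => hmin hy⟩
  obtain ⟨G, hG⟩ := hK.exists_bound_of_continuousOn ((continuousOn_grad hΩ hv.1).mono hKΩ)
  have hGp : ∀ x ∈ K, ‖gradient v x‖ ^ p ≤ |G| ^ p + 1 := fun x hx => by
    have := Real.rpow_le_rpow (norm_nonneg _) ((hG x hx).trans (le_abs_self G)) (by linarith : 0 ≤ p)
    linarith
  have hmp : 0 < m ^ p := by positivity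
  obtain ⟨C, hC, hL⟩ := soft_Lag (d := d) hp (ε := ε * m ^ p / (|G| ^ p + 1)) (by positivity)
  refine ⟨C / m ^ p, by positivity, fun u hu => ?_⟩
  have hu1 := C1c_of_test hu
  have hw := quot_C1c hΩ hu1 hv.1 hv.2.1
  obtain ⟨hi, hle⟩ := picone_le hΩ hV hp hQ hv hu1 hKΩ hK
  have i2 := int_on hK (cont_abs_rpow hp hw.1.continuous)
  have : ∫ x in K, ‖gradient (fun y => u y / v y) x‖ ^ p ≤ ∫ x in K, (C / m ^ p *
      Lag p ((u x / v x) • gradient v x) (v x • gradient (fun y => u y / v y) x) +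
      ε * |u x / v x| ^ p) := by
    refine setIntegral_mono_on (int_on hK (cont_grad_rpow hp hw.1))
      ((hi.const_mul _).add (i2.const_mul _)) hK.measurableSet (fun x hx => ?_)
    have h1 := hL ((u x / v x) • gradient v x) (v x • gradient (fun y => u y / v y) x)
    set L := Lag p ((u x / v x) • gradient v x) (v x • gradient (fun y => u y / v y) x)
    rw [norm_smul, norm_smul, Real.mul_rpow (norm_nonneg _) (norm_nonneg _),
      Real.mul_rpow (norm_nonneg _) (norm_nonneg _),
      Real.norm_of_nonneg (hm.le.trans (hmv x hx)), Real.norm_eq_abs] at h1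
    have h2 : m ^ p ≤ v x ^ p := Real.rpow_le_rpow hm.le (hmv x hx) (by linarith)
    have h3 := hGp x hx
    have h4 : ε * m ^ p / (|G| ^ p + 1) * (|u x / v x| ^ p * ‖gradient v x‖ ^ p) ≤
        ε * m ^ p * |u x / v x| ^ p := by
      calc _ ≤ ε * m ^ p / (|G| ^ p + 1) * (|u x / v x| ^ p * (|G| ^ p + 1)) := by gcongr
        _ = _ := by field_simp
    have h5 : m ^ p * ‖gradient (fun y => u y / v y) x‖ ^ p ≤
        v x ^ p * ‖gradient (fun y => u y / v y) x‖ ^ p := by gcongr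
    have h6 : m ^ p * ‖gradient (fun y => u y / v y) x‖ ^ p ≤
      m ^ p * (C / m ^ p * L + ε * |u x / v x| ^ p) := by
      have : m ^ p * (C / m ^ p * L + ε * |u x / v x| ^ p) =
        C * L + ε * m ^ p * |u x / v x| ^ p := by field_simp
      rw [this]; linarith
    exact le_of_mul_le_mul_left h6 hmp
  refine this.trans ?_
  rw [integral_add (hi.const_mul _) (i2.const_mul _), integral_const_mul, integral_const_mul]
  gcongr
end PT

namespace PT
variable {d : ℕ}

lemma seg_jensen {p : ℝ} (hp : 1 < p) {w : Euc d → ℝ} (hw : ContDiff ℝ 1 w) (a h : Euc d) :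
    |w (a + h) - w a| ^ p ≤ ‖h‖ ^ p * ∫ t in Set.Icc (0:ℝ) 1, ‖gradient w (a + t • h)‖ ^ p := by
  have cl : Continuous (fun t : ℝ => a + t • h) := by fun_prop
  have cg : Continuous (fun t : ℝ => ‖gradient w (a + t • h)‖) :=
    ((continuous_gradient hw).comp cl).norm
  have cgp : Continuous (fun t : ℝ => ‖gradient w (a + t • h)‖ ^ p) :=
    cg.rpow_const (fun _ => Or.inr (by linarith))
  have hd : ∀ t : ℝ, HasDerivAt (fun t : ℝ => w (a + t • h)) (fderiv ℝ w (a + t • h) h) t := by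
    intro t
    have h1 : HasDerivAt (fun t : ℝ => a + t • h) h t := by
      simpa using ((hasDerivAt_id t).smul_const h).const_add a
    exact ((hw.differentiable one_ne_zero (a + t • h)).hasFDerivAt).comp_hasDerivAt t h1
  have cd : Continuous (fun t : ℝ => fderiv ℝ w (a + t • h) h) :=
    ((hw.continuous_fderiv one_ne_zero).comp cl).clm_apply continuous_const
  have ftc := intervalIntegral.integral_eq_sub_of_hasDerivAt (a := 0) (b := 1)
    (fun t _ => hd t) (cd.intervalIntegrable 0 1)
  simp only [one_smul, zero_smul, add_zero] at ftc
  have h1 : |w (a + h) - w a| ≤ ‖h‖ * ∫ t in Set.Icc (0:ℝ) 1, ‖gradient w (a + t • h)‖ := by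
    rw [← ftc, intervalIntegral.integral_of_le zero_le_one, ← integral_Icc_eq_integral_Ioc,
      ← integral_const_mul]
    rw [← Real.norm_eq_abs]
    refine (norm_integral_le_integral_norm _).trans ?_
    refine integral_mono (cd.norm.continuousOn.integrableOn_compact isCompact_Icc)
      ((cg.const_mul _).continuousOn.integrableOn_compact isCompact_Icc) (fun t => ?_)
    have := norm_fderiv_apply_le w (a + t • h) h
    simpa [mul_comm] using this
  have : IsProbabilityMeasure (volume.restrict (Set.Icc (0:ℝ) 1)) := ⟨by simp⟩
  have hj := (convexOn_rpow hp.le).map_integral_le (μ := volume.restrict (Set.Icc (0:ℝ) 1))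
    (f := fun t : ℝ => ‖gradient w (a + t • h)‖)
    (continuousOn_id.rpow_const fun _ _ => Or.inr (by linarith)) isClosed_Ici
    (Eventually.of_forall fun t => norm_nonneg _)
    (cg.continuousOn.integrableOn_compact isCompact_Icc)
    (cgp.continuousOn.integrableOn_compact isCompact_Icc)
  calc |w (a + h) - w a| ^ p ≤ (‖h‖ * ∫ t in Set.Icc (0:ℝ) 1, ‖gradient w (a + t • h)‖) ^ p :=
        Real.rpow_le_rpow (abs_nonneg _) h1 (by linarith)
    _ = ‖h‖ ^ p * (∫ t in Set.Icc (0:ℝ) 1, ‖gradient w (a + t • h)‖) ^ p :=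
        Real.mul_rpow (norm_nonneg _) (integral_nonneg fun _ => norm_nonneg _)
    _ ≤ _ := by gcongr

open scoped ENNReal in
lemma double_est {p : ℝ} (hp : 1 < p) {w : Euc d → ℝ} (hw : ContDiff ℝ 1 w) (x : Euc d) {r : ℝ}
    (hr : 0 < r) :
    ∫⁻ a in Metric.ball x r, ∫⁻ z in Metric.ball x r, ENNReal.ofReal (|w z - w a| ^ p) ≤
      ENNReal.ofReal ((2 * r) ^ p) * (volume (Metric.ball (0 : Euc d) (2 * r)) *
        ∫⁻ z in Metric.ball x r, ENNReal.ofReal (‖gradient w z‖ ^ p)) := by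
  set B := Metric.ball x r with hB
  set B2 := Metric.ball (0 : Euc d) (2 * r) with hB2
  set g : Euc d → ℝ≥0∞ := B.indicator (fun z => ENNReal.ofReal (‖gradient w z‖ ^ p)) with hg
  have mg : Measurable g := by
    refine Measurable.indicator ?_ Metric.isOpen_ball.measurableSet
    exact ENNReal.measurable_ofReal.comp (cont_grad_rpow hp hw).measurable
  set c := ENNReal.ofReal ((2 * r) ^ p)
  set G : Euc d → Euc d → ℝ≥0∞ := fun a h => ∫⁻ t in Set.Icc (0:ℝ) 1, g (a + t • h) with hG
  have pt : ∀ a ∈ B, ∀ z ∈ B, ENNReal.ofReal (|w z - w a| ^ p) ≤ c * G a (z - a) := by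
    intro a ha z hz
    have h1 := seg_jensen hp hw a (z - a)
    rw [add_sub_cancel] at h1
    have hn : ‖z - a‖ ≤ 2 * r := by
      have h2 := Metric.mem_ball.mp ha
      have h3 := Metric.mem_ball.mp hz
      have := dist_triangle_right z a x
      rw [← dist_eq_norm]; linarith
    have cl : Continuous (fun t : ℝ => a + t • (z - a)) := by fun_prop
    have hi : IntegrableOn (fun t : ℝ => ‖gradient w (a + t • (z - a))‖ ^ p) (Set.Icc 0 1) :=
      ((cont_grad_rpow hp hw).comp cl).continuousOn.integrableOn_compact isCompact_Icc
    have e : G a (z - a) =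
        ENNReal.ofReal (∫ t in Set.Icc (0:ℝ) 1, ‖gradient w (a + t • (z - a))‖ ^ p) := by
      rw [ofReal_integral_eq_lintegral_ofReal hi (Eventually.of_forall fun t => by positivity)]
      refine setLIntegral_congr_fun measurableSet_Icc (fun t ht => ?_)
      have : a + t • (z - a) ∈ B := (convex_ball x r).add_smul_sub_mem ha hz ht
      simp only [hg, Set.indicator_of_mem this]
    rw [e, ← ENNReal.ofReal_mul (by positivity)]
    apply ENNReal.ofReal_le_ofReal
    refine h1.trans ?_
    gcongr
  have mG : ∀ a, Measurable (G a) := by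
    intro a
    refine Measurable.lintegral_prod_right' (f := fun q : Euc d × ℝ => g (a + q.2 • q.1)) ?_
    exact mg.comp (by fun_prop)
  have hz : ∀ a ∈ B, ∫⁻ z in B, ENNReal.ofReal (|w z - w a| ^ p) ≤ c * ∫⁻ h in B2, G a h := by
    intro a ha
    calc ∫⁻ z in B, ENNReal.ofReal (|w z - w a| ^ p) ≤ ∫⁻ z in B, c * G a (z - a) :=
          setLIntegral_mono' Metric.isOpen_ball.measurableSet (fun z hz => pt a ha z hz)
      _ = c * ∫⁻ z in B, G a (z - a) := by
          rw [lintegral_const_mul]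
          exact (mG a).comp (by fun_prop)
      _ ≤ c * ∫⁻ z, B2.indicator (G a) (z - a) := by
          refine mul_le_mul_right ?_ c
          rw [← lintegral_indicator Metric.isOpen_ball.measurableSet]
          refine lintegral_mono fun z => ?_
          by_cases hz : z ∈ B
          · rw [Set.indicator_of_mem hz, Set.indicator_of_mem]
            rw [hB2, mem_ball_zero_iff]
            have h2 := Metric.mem_ball.mp ha
            have h3 := Metric.mem_ball.mp hz
            have := dist_triangle_right z a x
            rw [← dist_eq_norm]; linarith
          · rw [Set.indicator_of_notMem hz]; exact zero_le
      _ = c * ∫⁻ h in B2, G a h := by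
          rw [lintegral_sub_right_eq_self (B2.indicator (G a)) a,
            lintegral_indicator Metric.isOpen_ball.measurableSet]
  have mG2 : Measurable (fun q : Euc d × Euc d => G q.1 q.2) := by
    refine Measurable.lintegral_prod_right'
      (f := fun q : (Euc d × Euc d) × ℝ => g (q.1.1 + q.2 • q.1.2)) ?_
    exact mg.comp (by fun_prop)
  calc ∫⁻ a in B, ∫⁻ z in B, ENNReal.ofReal (|w z - w a| ^ p)
      ≤ ∫⁻ a in B, c * ∫⁻ h in B2, G a h :=
        setLIntegral_mono' Metric.isOpen_ball.measurableSet hz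
    _ ≤ ∫⁻ a, c * ∫⁻ h in B2, G a h := setLIntegral_le_lintegral _ _
    _ = c * ∫⁻ a, ∫⁻ h in B2, G a h := by
        rw [lintegral_const_mul]
        exact mG2.lintegral_prod_right'
    _ = c * ∫⁻ h in B2, ∫⁻ a, G a h := by
        rw [lintegral_lintegral_swap]
        exact mG2.aemeasurable
    _ = c * ∫⁻ h in B2, ∫⁻ z, g z := by
        congr 1
        refine lintegral_congr fun h => ?_
        simp only [hG]
        rw [lintegral_lintegral_swap]
        · have : ∀ t : ℝ, ∫⁻ a, g (a + t • h) = ∫⁻ z, g z := fun t =>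
            lintegral_add_right_eq_self g (t • h)
          simp [this]
        · exact (mg.comp (by fun_prop : Measurable
            (fun q : Euc d × ℝ => q.1 + q.2 • h))).aemeasurable
    _ = _ := by
        rw [lintegral_const, Measure.restrict_apply_univ, mul_comm (∫⁻ z, g z), hg,
          lintegral_indicator Metric.isOpen_ball.measurableSet]

lemma int_ball {f : Euc d → ℝ} (hf : Continuous f) (x : Euc d) (r : ℝ) :
    IntegrableOn f (Metric.ball x r) :=
  (int_on (isCompact_closedBall x r) hf).mono_set Metric.ball_subset_closedBall

lemma ball_poincare {p : ℝ} (hp : 1 < p) (x : Euc d) {r : ℝ} (hr : 0 < r) :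
    ∃ C > 0, ∀ w : Euc d → ℝ, ContDiff ℝ 1 w → ∃ m : ℝ,
      ∫ z in Metric.ball x r, |w z - m| ^ p ≤ C * ∫ z in Metric.ball x r, ‖gradient w z‖ ^ p := by
  have hv0 : volume (Metric.ball x r) ≠ 0 := (Metric.measure_ball_pos volume x hr).ne'
  have hv1 : volume (Metric.ball x r) ≠ ⊤ := measure_ball_lt_top.ne
  set b := volume.real (Metric.ball x r) with hb
  have hb0 : 0 < b := ENNReal.toReal_pos hv0 hv1
  set b2 := volume.real (Metric.ball (0 : Euc d) (2 * r)) with hb2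
  have hb20 : 0 < b2 := ENNReal.toReal_pos
    (Metric.measure_ball_pos volume _ (by positivity)).ne' measure_ball_lt_top.ne
  refine ⟨(2 * r) ^ p * b2 / b, by positivity, fun w hw => ?_⟩
  have mw : Measurable (fun q : Euc d × Euc d => ENNReal.ofReal (|w q.2 - w q.1| ^ p)) := by
    have hc := hw.continuous
    have : Continuous (fun q : Euc d × Euc d => |w q.2 - w q.1| ^ p) :=
      (by fun_prop : Continuous (fun q : Euc d × Euc d => |w q.2 - w q.1|)).rpow_const
        (fun _ => Or.inr (by linarith))
    exact ENNReal.measurable_ofReal.comp this.measurable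
  obtain ⟨a, ha, hle⟩ := exists_le_setLAverage hv0 hv1
    (f := fun a => ∫⁻ z in Metric.ball x r, ENNReal.ofReal (|w z - w a| ^ p))
    (mw.lintegral_prod_right').aemeasurable
  refine ⟨w a, ?_⟩
  rw [setLAverage_eq] at hle
  have h2 := hle.trans (ENNReal.div_le_div_right (double_est hp hw x hr) _)
  have cc : Continuous (fun z => |w z - w a| ^ p) :=
    cont_abs_rpow hp (hw.continuous.sub continuous_const)
  rw [← ofReal_integral_eq_lintegral_ofReal (int_ball cc x r)
    (Eventually.of_forall fun t => by positivity),
    ← ofReal_integral_eq_lintegral_ofReal (int_ball (cont_grad_rpow hp hw) x r)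
    (Eventually.of_forall fun t => by positivity),
    ← ENNReal.ofReal_toReal (a := volume (Metric.ball (0 : Euc d) (2 * r))) measure_ball_lt_top.ne,
    ← ENNReal.ofReal_toReal (a := volume (Metric.ball x r)) hv1,
    ← ENNReal.ofReal_mul (by positivity), ← ENNReal.ofReal_mul (by positivity),
    ← ENNReal.ofReal_div_of_pos (show 0 < (volume (Metric.ball x r)).toReal from hb0),
    ENNReal.ofReal_le_ofReal_iff] at h2
  · refine h2.trans (le_of_eq ?_)
    simp only [hb, hb2, Measure.real]
    ring
  · have : 0 ≤ ∫ z in Metric.ball x r, ‖gradient w z‖ ^ p :=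
      integral_nonneg fun _ => by positivity
    positivity
end PT

namespace PT
variable {d : ℕ}

lemma abs_add_rpow_le {p : ℝ} (hp : 1 < p) (s t : ℝ) : |s + t| ^ p ≤ 2 ^ p * (|s| ^ p + |t| ^ p) :=
  (Real.rpow_le_rpow (abs_nonneg _) (abs_add_le s t) (by linarith)).trans
    (add_rpow_le hp (abs_nonneg _) (abs_nonneg _))

lemma int_tri {p : ℝ} (hp : 1 < p) {f : Euc d → ℝ} (hf : Continuous f) {A : Set (Euc d)}
    (hA : IsCompact (closure A)) (hAm : MeasurableSet A) (c e : ℝ) :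
    ∫ z in A, |f z - c| ^ p ≤ 2 ^ p * ((∫ z in A, |f z - e| ^ p) + |e - c| ^ p * volume.real A) := by
  have hAt : volume A ≠ ⊤ := ((measure_mono subset_closure).trans_lt hA.measure_lt_top).ne
  have hi : ∀ c : ℝ, IntegrableOn (fun z => |f z - c| ^ p) A := fun c =>
    (int_on hA (cont_abs_rpow hp (hf.sub continuous_const))).mono_set subset_closure
  have ic : IntegrableOn (fun _ : Euc d => |e - c| ^ p) A := integrableOn_const (hs := hAt)
  calc ∫ z in A, |f z - c| ^ p ≤ ∫ z in A, 2 ^ p * (|f z - e| ^ p + |e - c| ^ p) := by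
        refine setIntegral_mono_on (hi c) (((hi e).add ic).const_mul _) hAm (fun z _ => ?_)
        have := abs_add_rpow_le hp (f z - e) (e - c)
        rwa [sub_add_sub_cancel] at this
    _ = _ := by
        rw [integral_const_mul, integral_add (hi e) ic, setIntegral_const, smul_eq_mul, mul_comm
          (volume.real A)]

lemma cb (x : Euc d) (r : ℝ) : IsCompact (closure (Metric.ball x r)) :=
  (isCompact_closedBall x r).of_isClosed_subset isClosed_closure Metric.closure_ball_subset_closedBall

lemma sub_ball_poincare {p : ℝ} (hp : 1 < p) (x y : Euc d) {r ρ : ℝ} (hr : 0 < r) (hρ : 0 < ρ)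
    (hs : Metric.ball y ρ ⊆ Metric.ball x r) :
    ∃ k > 0, ∀ w : Euc d → ℝ, ContDiff ℝ 1 w → ∀ c : ℝ,
      ∫ z in Metric.ball x r, |w z - c| ^ p ≤ k * ((∫ z in Metric.ball y ρ, |w z - c| ^ p) +
        ∫ z in Metric.ball x r, ‖gradient w z‖ ^ p) := by
  obtain ⟨C, hC, h⟩ := ball_poincare hp x hr
  set a := volume.real (Metric.ball y ρ)
  have ha : 0 < a := ENNReal.toReal_pos (Metric.measure_ball_pos volume y hρ).ne'
    measure_ball_lt_top.ne
  set b := volume.real (Metric.ball x r)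
  have hb : 0 < b := ENNReal.toReal_pos (Metric.measure_ball_pos volume x hr).ne'
    measure_ball_lt_top.ne
  have h2 : (0:ℝ) < 2 ^ p := by positivity
  refine ⟨2 ^ p * (C + 2 ^ p * (1 + C) * b / a), by positivity, fun w hw c => ?_⟩
  obtain ⟨m, hm⟩ := h w hw
  set D := ∫ z in Metric.ball x r, ‖gradient w z‖ ^ p with hDdef
  have hD : 0 ≤ D := integral_nonneg fun _ => by positivity
  set A := ∫ z in Metric.ball y ρ, |w z - c| ^ p with hAdef
  have hA : 0 ≤ A := integral_nonneg fun _ => by positivity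
  have cw := hw.continuous
  have e1 := int_tri hp cw (cb x r) Metric.isOpen_ball.measurableSet c m
  have e2 : |m - c| ^ p * a ≤ 2 ^ p * (A + ∫ z in Metric.ball y ρ, |w z - m| ^ p) := by
    have i1 := int_ball (cont_abs_rpow hp (cw.sub continuous_const) : Continuous fun z => |w z - c| ^ p) y ρ
    have i2 := int_ball (cont_abs_rpow hp (cw.sub continuous_const) : Continuous fun z => |w z - m| ^ p) y ρ
    rw [hAdef, ← integral_add i1 i2, ← integral_const_mul, mul_comm, ← smul_eq_mul, ← setIntegral_const]
    refine setIntegral_mono_on (integrableOn_const (hs := measure_ball_lt_top.ne))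
      ((i1.add i2).const_mul _) Metric.isOpen_ball.measurableSet (fun z _ => ?_)
    have := abs_add_rpow_le hp (w z - c) (m - w z)
    rw [abs_sub_comm m (w z)] at this
    rwa [show w z - c + (m - w z) = m - c by ring] at this
  have e3 : ∫ z in Metric.ball y ρ, |w z - m| ^ p ≤ ∫ z in Metric.ball x r, |w z - m| ^ p :=
    setIntegral_mono_set (int_ball (cont_abs_rpow hp (cw.sub continuous_const)) x r)
      (Eventually.of_forall fun _ => by positivity) hs.eventuallyLE
  have e4 : |m - c| ^ p * a ≤ 2 ^ p * (1 + C) * (A + D) := by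
    refine (e2.trans (mul_le_mul_of_nonneg_left (add_le_add_right (e3.trans hm) A) h2.le)).trans ?_
    nlinarith [mul_nonneg h2.le hD, mul_nonneg h2.le (mul_nonneg hC.le hA)]
  have e5 : |m - c| ^ p ≤ 2 ^ p * (1 + C) * (A + D) / a := by rwa [le_div_iff₀ ha]
  refine e1.trans ?_
  calc 2 ^ p * ((∫ z in Metric.ball x r, |w z - m| ^ p) + |m - c| ^ p * b)
      ≤ 2 ^ p * (C * D + 2 ^ p * (1 + C) * (A + D) / a * b) := by gcongr
    _ ≤ 2 ^ p * (C * (A + D) + 2 ^ p * (1 + C) * (A + D) / a * b) := by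
        have : 0 ≤ C * A := by positivity
        gcongr; linarith
    _ = _ := by ring

def Pr (Ω : Set (Euc d)) (V : Euc d → ℝ) (p : ℝ) (v : Euc d → ℝ) (B0 : Set (Euc d))
    (m : (Euc d → ℝ) → ℝ) (x : Euc d) (r : ℝ) : Prop :=
  (∃ C > 0, ∀ u : Euc d → ℝ, IsTestFun Ω u → ∫ z in Metric.ball x r, |u z / v z| ^ p ≤
    C * (energyQ Ω V p u + ∫ z in B0, |u z / v z| ^ p)) ∧
  ∀ ε > 0, ∃ C > 0, ∀ u : Euc d → ℝ, IsTestFun Ω u →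
    ∫ z in Metric.ball x r, |u z / v z - m u| ^ p ≤
      C * energyQ Ω V p u + ε * ∫ z in B0, |u z / v z| ^ p

lemma grad_est_ball {Ω : Set (Euc d)} (hΩ : IsOpen Ω) {V : Euc d → ℝ} (hV : LocBddPotential Ω V)
    {p : ℝ} (hp : 1 < p) (hQ : ∀ u : Euc d → ℝ, IsTestFun Ω u → 0 ≤ energyQ Ω V p u)
    {v : Euc d → ℝ} (hv : IsGroundState Ω V p v)
    {x : Euc d} {r : ℝ} (hr : 0 < r) (hx : Metric.closedBall x r ⊆ Ω) {ε : ℝ} (hε : 0 < ε) :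
    ∃ C > 0, ∀ u : Euc d → ℝ, IsTestFun Ω u →
      ∫ z in Metric.ball x r, ‖gradient (fun y => u y / v y) z‖ ^ p ≤
        C * energyQ Ω V p u + ε * ∫ z in Metric.ball x r, |u z / v z| ^ p := by
  have hae : Metric.closedBall x r =ᵐ[volume] Metric.ball x r := by
    rw [← Metric.ball_union_sphere]
    refine union_ae_eq_left_of_ae_eq_empty ?_
    rw [ae_eq_empty]
    exact Measure.addHaar_sphere_of_ne_zero _ _ hr.ne'
  obtain ⟨C, hC, h⟩ := grad_est hΩ hV hp hQ hv hx (isCompact_closedBall x r) hε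
  refine ⟨C, hC, fun u hu => ?_⟩
  have := h u hu
  rwa [setIntegral_congr_set hae, setIntegral_congr_set hae] at this

lemma Pr_step {Ω : Set (Euc d)} (hΩ : IsOpen Ω) {V : Euc d → ℝ} (hV : LocBddPotential Ω V)
    {p : ℝ} (hp : 1 < p) (hQ : ∀ u : Euc d → ℝ, IsTestFun Ω u → 0 ≤ energyQ Ω V p u)
    {v : Euc d → ℝ} (hv : IsGroundState Ω V p v) {B0 : Set (Euc d)} {m : (Euc d → ℝ) → ℝ}
    {x y : Euc d} {r r' : ℝ} (hr : 0 < r) (hx : Metric.closedBall x r ⊆ Ω) (hr' : 0 < r')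
    (hy : y ∈ Metric.ball x r) (hP : Pr Ω V p v B0 m y r') : Pr Ω V p v B0 m x r := by
  obtain ⟨ρ1, hρ1, hs1⟩ := Metric.isOpen_iff.mp Metric.isOpen_ball y hy
  set ρ := min ρ1 r'
  have hρ : 0 < ρ := lt_min hρ1 hr'
  have hA : Metric.ball y ρ ⊆ Metric.ball x r :=
    (Metric.ball_subset_ball (min_le_left _ _)).trans hs1
  have hA' : Metric.ball y ρ ⊆ Metric.ball y r' := Metric.ball_subset_ball (min_le_right _ _)
  obtain ⟨k, hk, hkk⟩ := sub_ball_poincare hp x y hr hρ hA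
  obtain ⟨⟨C1, hC1, h1⟩, h2⟩ := hP
  have hcont : ∀ u, IsTestFun Ω u → ContDiff ℝ 1 (fun y => u y / v y) := fun u hu =>
    (quot_C1c hΩ (C1c_of_test hu) hv.1 hv.2.1).1
  have hmono : ∀ u, IsTestFun Ω u → ∀ c : ℝ, ∫ z in Metric.ball y ρ, |u z / v z - c| ^ p ≤
      ∫ z in Metric.ball y r', |u z / v z - c| ^ p := fun u hu c =>
    setIntegral_mono_set
      (int_ball (cont_abs_rpow hp ((hcont u hu).continuous.sub continuous_const)) _ _)
      (Eventually.of_forall fun _ => by positivity) hA'.eventuallyLE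
  have hN : ∀ u : Euc d → ℝ, 0 ≤ ∫ z in B0, |u z / v z| ^ p := fun u =>
    integral_nonneg fun _ => by positivity
  have first : ∃ C > 0, ∀ u : Euc d → ℝ, IsTestFun Ω u → ∫ z in Metric.ball x r, |u z / v z| ^ p ≤
    C * (energyQ Ω V p u + ∫ z in B0, |u z / v z| ^ p) := by
    obtain ⟨Cg, hCg, hg⟩ := grad_est_ball hΩ hV hp hQ hv hr hx (ε := 1 / (2 * k)) (by positivity)
    refine ⟨2 * k * (C1 + Cg), by positivity, fun u hu => ?_⟩
    have a1 := hkk _ (hcont u hu) 0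
    have a2 := hmono u hu 0
    simp only [sub_zero] at a1 a2
    have a3 := hg u hu
    have a4 := h1 u hu
    have a5 := hQ u hu
    have a6 := hN u
    set X := ∫ z in Metric.ball x r, |u z / v z| ^ p
    set N := ∫ z in B0, |u z / v z| ^ p
    set q := energyQ Ω V p u
    have a7 : X ≤ k * (C1 * (q + N) + (Cg * q + 1 / (2 * k) * X)) := by
      refine a1.trans ?_
      gcongr
      exact a2.trans a4
    have a8 : k * (C1 * (q + N) + (Cg * q + 1 / (2 * k) * X)) =
      k * (C1 * (q + N) + Cg * q) + X / 2 := by field_simp; ring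
    nlinarith [mul_nonneg hk.le (mul_nonneg hCg.le a6)]
  refine ⟨first, fun ε hε => ?_⟩
  obtain ⟨C3, hC3, h3⟩ := first
  obtain ⟨C2, hC2, h2⟩ := h2 (ε / (2 * k)) (by positivity)
  obtain ⟨Cg, hCg, hg⟩ := grad_est_ball hΩ hV hp hQ hv hr hx (ε := ε / (2 * k * C3)) (by positivity)
  refine ⟨k * (C2 + Cg) + ε / 2, by positivity, fun u hu => ?_⟩
  have a1 := hkk _ (hcont u hu) (m u)
  have a2 := hmono u hu (m u)
  have a3 := hg u hu
  have a4 := h2 u hu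
  have a5 := hQ u hu
  have a6 := hN u
  have a7 := h3 u hu
  set X := ∫ z in Metric.ball x r, |u z / v z| ^ p
  set N := ∫ z in B0, |u z / v z| ^ p
  set q := energyQ Ω V p u
  calc _ ≤ k * ((C2 * q + ε / (2 * k) * N) + (Cg * q + ε / (2 * k * C3) * (C3 * (q + N)))) := by
        refine a1.trans ?_
        gcongr
        · exact a2.trans a4
        · exact a3.trans (by gcongr)
    _ = _ := by field_simp; ring

lemma Pr_base {Ω : Set (Euc d)} (hΩ : IsOpen Ω) {V : Euc d → ℝ} (hV : LocBddPotential Ω V)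
    {p : ℝ} (hp : 1 < p) (hQ : ∀ u : Euc d → ℝ, IsTestFun Ω u → 0 ≤ energyQ Ω V p u)
    {v : Euc d → ℝ} (hv : IsGroundState Ω V p v)
    {x : Euc d} {r : ℝ} (hr : 0 < r) (hx : Metric.closedBall x r ⊆ Ω) :
    ∃ m : (Euc d → ℝ) → ℝ, Pr Ω V p v (Metric.ball x r) m x r := by
  obtain ⟨C, hC, h⟩ := ball_poincare hp x hr
  have hcont : ∀ u, IsTestFun Ω u → ContDiff ℝ 1 (fun y => u y / v y) := fun u hu =>
    (quot_C1c hΩ (C1c_of_test hu) hv.1 hv.2.1).1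
  have : ∀ u : Euc d → ℝ, ∃ m : ℝ, IsTestFun Ω u →
      ∫ z in Metric.ball x r, |u z / v z - m| ^ p ≤
        C * ∫ z in Metric.ball x r, ‖gradient (fun y => u y / v y) z‖ ^ p := fun u => by
    by_cases hu : IsTestFun Ω u
    · obtain ⟨m, hm⟩ := h _ (hcont u hu)
      exact ⟨m, fun _ => hm⟩
    · exact ⟨0, fun h => absurd h hu⟩
  choose m hm using this
  refine ⟨m, ⟨1, one_pos, fun u hu => by have := hQ u hu; linarith⟩, fun ε hε => ?_⟩
  obtain ⟨Cg, hCg, hg⟩ := grad_est_ball hΩ hV hp hQ hv hr hx (ε := ε / C) (by positivity)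
  refine ⟨C * Cg, by positivity, fun u hu => ?_⟩
  calc _ ≤ C * (Cg * energyQ Ω V p u + ε / C * ∫ z in Metric.ball x r, |u z / v z| ^ p) :=
        (hm u hu).trans (by gcongr; exact hg u hu)
    _ = _ := by field_simp

lemma Pr_all {Ω : Set (Euc d)} (hΩ : IsOpen Ω) (hΩc : IsConnected Ω) {V : Euc d → ℝ}
    (hV : LocBddPotential Ω V)
    {p : ℝ} (hp : 1 < p) (hQ : ∀ u : Euc d → ℝ, IsTestFun Ω u → 0 ≤ energyQ Ω V p u)
    {v : Euc d → ℝ} (hv : IsGroundState Ω V p v) :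
    ∃ x0 r0, 0 < r0 ∧ Metric.closedBall x0 r0 ⊆ Ω ∧ ∃ m : (Euc d → ℝ) → ℝ,
      Pr Ω V p v (Metric.ball x0 r0) m x0 r0 ∧
      ∀ x ∈ Ω, ∃ r > 0, Pr Ω V p v (Metric.ball x0 r0) m x r := by
  obtain ⟨x0, hx0⟩ := hΩc.nonempty
  have hcb : ∀ x ∈ Ω, ∃ r > 0, Metric.closedBall x r ⊆ Ω := fun x hx =>
    Metric.nhds_basis_closedBall.mem_iff.mp (hΩ.mem_nhds hx)
  obtain ⟨r0, hr0, hb0⟩ := hcb x0 hx0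
  obtain ⟨m, hm⟩ := Pr_base hΩ hV hp hQ hv hr0 hb0
  refine ⟨x0, r0, hr0, hb0, m, hm, ?_⟩
  set S : Set (Euc d) := {x | x ∈ Ω ∧ ∃ r > 0, Pr Ω V p v (Metric.ball x0 r0) m x r} with hS
  have hSo : IsOpen S := by
    rw [Metric.isOpen_iff]
    rintro y ⟨hy, r', hr', hP⟩
    obtain ⟨R, hR, hRΩ⟩ := hcb y hy
    refine ⟨R / 2, by positivity, fun x hx => ?_⟩
    have hxy := Metric.mem_ball.mp hx
    have hsub : Metric.closedBall x (R / 2) ⊆ Ω := by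
      refine (Metric.closedBall_subset_closedBall' ?_).trans hRΩ
      linarith
    exact ⟨hsub (Metric.mem_closedBall_self (by positivity)), R / 2, by positivity,
      Pr_step hΩ hV hp hQ hv (by positivity) hsub hr' (Metric.mem_ball'.mpr hxy) hP⟩
  have := hΩc.isPreconnected.subset_of_closure_inter_subset hSo ⟨x0, hx0, hx0, r0, hr0, hm⟩ (by
    rintro x ⟨hxc, hx⟩
    obtain ⟨r, hr, hrΩ⟩ := hcb x hx
    obtain ⟨y, hyS, hyd⟩ := Metric.mem_closure_iff.mp hxc r hr
    obtain ⟨hy, r', hr', hP⟩ := hyS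
    exact ⟨hx, r, hr, Pr_step hΩ hV hp hQ hv hr hrΩ hr' (Metric.mem_ball'.mpr hyd) hP⟩)
  exact fun x hx => (this hx).2
end PT

namespace PT
variable {d : ℕ}

lemma cont_quot {Ω : Set (Euc d)} (hΩ : IsOpen Ω) {V : Euc d → ℝ} {p : ℝ} {v : Euc d → ℝ}
    (hv : IsGroundState Ω V p v) {u : Euc d → ℝ} (hu : IsTestFun Ω u) :
    C1c Ω (fun x => u x / v x) :=
  quot_C1c hΩ (C1c_of_test hu) hv.1 hv.2.1

lemma ofReal_int {f : Euc d → ℝ} (hf : Continuous f) (h0 : ∀ x, 0 ≤ f x) {A : Set (Euc d)}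
    (hA : IsCompact (closure A)) :
    ENNReal.ofReal (∫ z in A, f z) = ∫⁻ z in A, ENNReal.ofReal (f z) :=
  ofReal_integral_eq_lintegral_ofReal ((int_on hA hf).mono_set subset_closure)
    (Eventually.of_forall h0)

lemma compact_est {Ω : Set (Euc d)} (hΩ : IsOpen Ω) {V : Euc d → ℝ}
    {p : ℝ} (hp : 1 < p) (hQ : ∀ u : Euc d → ℝ, IsTestFun Ω u → 0 ≤ energyQ Ω V p u)
    {v : Euc d → ℝ} (hv : IsGroundState Ω V p v) {B0 : Set (Euc d)} {m : (Euc d → ℝ) → ℝ}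
    (hall : ∀ x ∈ Ω, ∃ r > 0, Pr Ω V p v B0 m x r)
    {K : Set (Euc d)} (hK : IsCompact K) (hKΩ : K ⊆ Ω) {ε : ℝ} (hε : 0 < ε) :
    ∃ C > 0, ∀ u, IsTestFun Ω u → ∫ z in K, |u z / v z - m u| ^ p ≤
      C * energyQ Ω V p u + ε * ∫ z in B0, |u z / v z| ^ p := by
  have hN : ∀ u : Euc d → ℝ, 0 ≤ ∫ z in B0, |u z / v z| ^ p := fun u =>
    integral_nonneg (fun z => by positivity)
  have hc : ∀ u, IsTestFun Ω u → Continuous (fun z => |u z / v z - m u| ^ p) := fun u hu =>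
    cont_abs_rpow hp ((cont_quot hΩ hv hu).1.continuous.sub continuous_const)
  have key : ∀ ε > 0, ∃ C > 0, ∀ u, IsTestFun Ω u →
      ∫⁻ z in K, ENNReal.ofReal (|u z / v z - m u| ^ p) ≤
      ENNReal.ofReal (C * energyQ Ω V p u + ε * ∫ z in B0, |u z / v z| ^ p) := by
    refine hK.induction_on (p := fun s => ∀ ε > 0, ∃ C > 0, ∀ u, IsTestFun Ω u →
      ∫⁻ z in s, ENNReal.ofReal (|u z / v z - m u| ^ p) ≤
      ENNReal.ofReal (C * energyQ Ω V p u + ε * ∫ z in B0, |u z / v z| ^ p)) ?_ ?_ ?_ ?_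
    · exact fun ε _ => ⟨1, one_pos, fun u _ => by simp⟩
    · intro s t hst ht ε hε
      obtain ⟨C, hC, h⟩ := ht ε hε
      exact ⟨C, hC, fun u hu => (lintegral_mono_set hst).trans (h u hu)⟩
    · intro s t hs ht ε hε
      obtain ⟨C, hC, h⟩ := hs (ε / 2) (by positivity)
      obtain ⟨D, hD, h'⟩ := ht (ε / 2) (by positivity)
      refine ⟨C + D, by positivity, fun u hu => (lintegral_union_le _ _ _).trans ?_⟩
      refine (add_le_add (h u hu) (h' u hu)).trans ?_
      have := hQ u hu
      have := hN u
      rw [← ENNReal.ofReal_add (by positivity) (by positivity)]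
      apply ENNReal.ofReal_le_ofReal
      apply le_of_eq
      ring
    · intro x hx
      obtain ⟨r, hr, h⟩ := hall x (hKΩ hx)
      refine ⟨Metric.ball x r, mem_nhdsWithin_of_mem_nhds (Metric.ball_mem_nhds x hr), fun ε hε => ?_⟩
      obtain ⟨C, hC, h⟩ := h.2 ε hε
      refine ⟨C, hC, fun u hu => ?_⟩
      rw [← ofReal_int (hc u hu) (fun x => by positivity) (cb x r)]
      exact ENNReal.ofReal_le_ofReal (h u hu)
  obtain ⟨C, hC, h⟩ := key ε hε
  refine ⟨C, hC, fun u hu => ?_⟩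
  have h1 := h u hu
  rw [← ofReal_int (hc u hu) (fun x => by positivity) (by rwa [hK.isClosed.closure_eq])] at h1
  have := hQ u hu
  have := hN u
  exact (ENNReal.ofReal_le_ofReal_iff (by positivity)).mp h1

lemma weight_exists {Ω : Set (Euc d)} (hΩ : IsOpen Ω) (hne : Ω.Nonempty) {V : Euc d → ℝ}
    {p : ℝ} (hp : 1 < p) (hQ : ∀ u : Euc d → ℝ, IsTestFun Ω u → 0 ≤ energyQ Ω V p u)
    {v : Euc d → ℝ} (hv : IsGroundState Ω V p v) {B0 : Set (Euc d)} {m : (Euc d → ℝ) → ℝ}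
    (hall : ∀ x ∈ Ω, ∃ r > 0, Pr Ω V p v B0 m x r) :
    ∃ W : Euc d → ℝ, Continuous W ∧ (∀ x ∈ Ω, 0 < W x) ∧ ∀ u, IsTestFun Ω u →
      ∫ x in Ω, W x * |u x / v x| ^ p ≤ 2 * (energyQ Ω V p u + ∫ z in B0, |u z / v z| ^ p) := by
  have hall2 : ∀ x, ∃ r : ℝ, ∃ C : ℝ, 0 < r ∧ 1 ≤ C ∧ (x ∈ Ω → ∀ u, IsTestFun Ω u →
      ∫ z in Metric.ball x r, |u z / v z| ^ p ≤
        C * (energyQ Ω V p u + ∫ z in B0, |u z / v z| ^ p)) := by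
    intro x
    by_cases hx : x ∈ Ω
    · obtain ⟨r, hr, ⟨C, hC, h⟩, -⟩ := hall x hx
      refine ⟨r, max 1 C, hr, le_max_left _ _, fun _ u hu => (h u hu).trans ?_⟩
      have := hQ u hu
      have : 0 ≤ ∫ z in B0, |u z / v z| ^ p := integral_nonneg (fun z => by positivity)
      gcongr
      exact le_max_right _ _
    · exact ⟨1, 1, one_pos, le_rfl, fun h => absurd h hx⟩
  choose r C hr hC h using hall2
  obtain ⟨t, htΩ, htc, hcov⟩ := TopologicalSpace.countable_cover_nhdsWithin (s := Ω)
    (f := fun x => Metric.ball x (r x))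
    (fun x hx => mem_nhdsWithin_of_mem_nhds (Metric.ball_mem_nhds x (hr x)))
  have htn : t.Nonempty := by
    obtain ⟨x, hx⟩ := hne
    obtain ⟨y, hy, -⟩ := Set.mem_iUnion₂.mp (hcov hx)
    exact ⟨y, hy⟩
  obtain ⟨y, hy⟩ := htc.exists_eq_range htn
  have hyΩ : ∀ n, y n ∈ Ω := fun n => htΩ (hy ▸ Set.mem_range_self n)
  set a : ℕ → Euc d → ℝ := fun n x =>
    (1 / 2 : ℝ) ^ n * ((C (y n))⁻¹ * max 0 (min 1 (r (y n) - dist x (y n)))) with ha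
  have hCi : ∀ n, 0 < (C (y n))⁻¹ ∧ (C (y n))⁻¹ ≤ 1 := fun n =>
    ⟨inv_pos.mpr (by linarith [hC (y n)]), inv_le_one_of_one_le₀ (hC _)⟩
  have hb1 : ∀ n x, max 0 (min 1 (r (y n) - dist x (y n))) ≤ 1 := fun n x =>
    max_le zero_le_one (min_le_left _ _)
  have hb0 : ∀ n x, 0 ≤ max 0 (min 1 (r (y n) - dist x (y n))) := fun n x => le_max_left _ _
  have ha0 : ∀ n x, 0 ≤ a n x := fun n x =>
    mul_nonneg (by positivity) (mul_nonneg (hCi n).1.le (hb0 n x))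
  have ha1 : ∀ n x, a n x ≤ (1 / 2 : ℝ) ^ n := fun n x =>
    mul_le_of_le_one_right (by positivity)
      (mul_le_one₀ (hCi n).2 (hb0 n x) (hb1 n x))
  have hac : ∀ n, Continuous (a n) := fun n => by
    simp only [ha]; fun_prop
  have hsum : ∀ x, Summable (fun n => a n x) := fun x =>
    Summable.of_nonneg_of_le (fun n => ha0 n x) (fun n => ha1 n x) summable_geometric_two
  refine ⟨fun x => ∑' n, a n x, ?_, ?_, ?_⟩
  · refine continuous_tsum hac summable_geometric_two (fun n x => ?_)
    rw [Real.norm_of_nonneg (ha0 n x)]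
    exact ha1 n x
  · intro x hx
    obtain ⟨z, hz, hxz⟩ := Set.mem_iUnion₂.mp (hcov hx)
    rw [hy] at hz
    obtain ⟨n, rfl⟩ := hz
    refine (hsum x).tsum_pos (fun n => ha0 n x) n ?_
    have : 0 < r (y n) - dist x (y n) := sub_pos.mpr (Metric.mem_ball.mp hxz)
    exact mul_pos (by positivity) (mul_pos (hCi n).1 (lt_max_of_lt_right (lt_min one_pos this)))
  · intro u hu
    have hw := cont_quot hΩ hv hu
    have hgc : Continuous (fun x => |u x / v x| ^ p) := cont_abs_rpow hp hw.1.continuous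
    have hg0 : ∀ x, 0 ≤ |u x / v x| ^ p := fun x => by positivity
    have hgi : Integrable (fun x => |u x / v x| ^ p) := by
      refine integrable_cc hw.2.1 hgc (fun x hx => ?_)
      have : u x / v x = 0 := image_eq_zero_of_notMem_tsupport (f := fun x => u x / v x) hx
      rw [this, abs_zero, Real.zero_rpow (by linarith)]
    set E := energyQ Ω V p u + ∫ z in B0, |u z / v z| ^ p with hE
    have hE0 : 0 ≤ E := add_nonneg (hQ u hu) (integral_nonneg (fun z => by positivity))
    have hFi : ∀ n, Integrable (fun x => a n x * |u x / v x| ^ p) := fun n => by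
      refine hgi.mono' ((hac n).mul hgc).aestronglyMeasurable (Eventually.of_forall fun x => ?_)
      rw [Real.norm_of_nonneg (mul_nonneg (ha0 n x) (hg0 x))]
      exact mul_le_of_le_one_left (hg0 x) ((ha1 n x).trans (pow_le_one₀ (by norm_num) (by norm_num)))
    have hbd : ∀ n, ∫ x in Ω, a n x * |u x / v x| ^ p ≤ (1 / 2 : ℝ) ^ n * E := by
      intro n
      calc ∫ x in Ω, a n x * |u x / v x| ^ p ≤ ∫ x, a n x * |u x / v x| ^ p :=
            setIntegral_le_integral (hFi n) (Eventually.of_forall fun x => mul_nonneg (ha0 n x) (hg0 x))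
        _ ≤ ∫ x, (Metric.ball (y n) (r (y n))).indicator
              (fun x => ((1 / 2 : ℝ) ^ n * (C (y n))⁻¹) * |u x / v x| ^ p) x := by
            refine integral_mono (hFi n) ((hgi.const_mul _).indicator measurableSet_ball) (fun x => ?_)
            by_cases hx : x ∈ Metric.ball (y n) (r (y n))
            · simp only [Set.indicator_of_mem hx, ha]
              refine mul_le_mul_of_nonneg_right ?_ (hg0 x)
              rw [← mul_assoc]
              exact mul_le_of_le_one_right (mul_nonneg (by positivity) (hCi n).1.le) (hb1 n x)
            · simp only [Set.indicator_of_notMem hx, ha]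
              have : r (y n) - dist x (y n) ≤ 0 := by
                rw [Metric.mem_ball, not_lt] at hx; linarith
              rw [max_eq_left ((min_le_right _ _).trans this)]
              simp
        _ = ((1 / 2 : ℝ) ^ n * (C (y n))⁻¹) * ∫ x in Metric.ball (y n) (r (y n)), |u x / v x| ^ p := by
            rw [integral_indicator measurableSet_ball, integral_const_mul]
        _ ≤ ((1 / 2 : ℝ) ^ n * (C (y n))⁻¹) * (C (y n) * E) :=
            mul_le_mul_of_nonneg_left (h (y n) (hyΩ n) u hu)
              (mul_nonneg (by positivity) (hCi n).1.le)
        _ = (1 / 2 : ℝ) ^ n * E := by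
            have : C (y n) ≠ 0 := by linarith [hC (y n)]
            field_simp
    have hsE : Summable (fun n : ℕ => (1 / 2 : ℝ) ^ n * E) := summable_geometric_two.mul_right _
    have hs2 : Summable (fun n => ∫ x in Ω, ‖a n x * |u x / v x| ^ p‖) := by
      refine Summable.of_nonneg_of_le (fun n => integral_nonneg fun x => norm_nonneg _) (fun n => ?_) hsE
      simp_rw [fun x => Real.norm_of_nonneg (mul_nonneg (ha0 n x) (hg0 x))]
      exact hbd n
    have hS := hasSum_integral_of_summable_integral_norm (fun n => (hFi n).integrableOn (s := Ω)) hs2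
    have := hasSum_le hbd hS hsE.hasSum
    rw [tsum_mul_right, tsum_geometric_two] at this
    simpa only [tsum_mul_right] using this

end PT

namespace PT
variable {d : ℕ}

lemma jensen_K {p : ℝ} (hp : 1 < p) {K : Set (Euc d)} (hK : IsCompact K) {φ : Euc d → ℝ}
    (hφ : ContinuousOn φ K) : ∃ k > 0, ∀ f : Euc d → ℝ, Continuous f →
      |∫ x in K, f x * φ x| ^ p ≤ k * ∫ x in K, |f x| ^ p := by
  obtain ⟨M, hM⟩ := hK.exists_bound_of_continuousOn hφ
  by_cases hK0 : volume K = 0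
  · refine ⟨1, one_pos, fun f _ => ?_⟩
    rw [setIntegral_measure_zero _ hK0, setIntegral_measure_zero _ hK0, abs_zero,
      Real.zero_rpow (by linarith)]
    simp
  have hKt : volume K ≠ ⊤ := hK.measure_lt_top.ne
  have hb : 0 < volume.real K := ENNReal.toReal_pos hK0 hKt
  set b := volume.real K with hbdef
  set M' := max M 1
  have hM' : 0 < M' := lt_max_of_lt_right one_pos
  refine ⟨(M' * b) ^ p * b⁻¹, by positivity, fun f hf => ?_⟩
  have h1 : |∫ x in K, f x * φ x| ≤ M' * ∫ x in K, |f x| := by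
    rw [← integral_const_mul]
    refine (abs_integral_le_integral_abs).trans ?_
    refine integral_mono_of_nonneg (Eventually.of_forall fun x => abs_nonneg _)
      ((int_on hK hf.abs).const_mul _) ?_
    refine (ae_restrict_iff' hK.measurableSet).mpr (Eventually.of_forall fun x hx => ?_)
    simp only [abs_mul]
    rw [mul_comm]
    exact mul_le_mul_of_nonneg_right ((hM x hx).trans (le_max_left _ _)) (abs_nonneg _)
  have h2 := (convexOn_rpow hp.le).map_set_average_le (μ := volume) (t := K) (f := fun x => |f x|)
    (Real.continuous_rpow_const (by linarith)).continuousOn isClosed_Ici hK0 hKt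
    (Eventually.of_forall fun x => Set.mem_Ici.mpr (abs_nonneg _)) (int_on hK hf.abs)
    (int_on hK (cont_abs_rpow hp hf))
  rw [setAverage_eq, setAverage_eq, smul_eq_mul, smul_eq_mul, ← hbdef] at h2
  have hi : 0 ≤ ∫ x in K, |f x| := integral_nonneg fun x => abs_nonneg _
  calc |∫ x in K, f x * φ x| ^ p ≤ (M' * ∫ x in K, |f x|) ^ p :=
        Real.rpow_le_rpow (abs_nonneg _) h1 (by linarith)
    _ = (M' * b) ^ p * (b⁻¹ * ∫ x in K, |f x|) ^ p := by
        rw [← Real.mul_rpow (by positivity) (by positivity)]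
        congr 1
        field_simp
    _ ≤ (M' * b) ^ p * (b⁻¹ * ∫ x in K, |f x| ^ p) := by gcongr
    _ = _ := by ring

lemma mean_est {Ω : Set (Euc d)} (hΩ : IsOpen Ω) {V : Euc d → ℝ}
    {p : ℝ} (hp : 1 < p) 
    {v : Euc d → ℝ} (hv : IsGroundState Ω V p v) {ψ : Euc d → ℝ} (hψ : IsTestFun Ω ψ)
    (hs : (∫ x in Ω, ψ x * v x) ≠ 0) :
    ∃ k > 0, ∀ u, IsTestFun Ω u → ∀ m : ℝ,
      |m| ^ p ≤ k * (|∫ x in Ω, u x * ψ x| ^ p + ∫ x in tsupport ψ, |u x / v x - m| ^ p) := by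
  have hK : IsCompact (tsupport ψ) := hψ.2.1
  have hcφ : ContinuousOn (fun x => ψ x * v x) (tsupport ψ) :=
    hψ.1.continuous.continuousOn.mul (hv.1.continuousOn.mono hψ.2.2)
  obtain ⟨k, hk, hkk⟩ := jensen_K hp hK hcφ
  have hres : ∀ g : Euc d → ℝ, (∀ x, x ∉ tsupport ψ → g x = 0) →
      ∫ x in Ω, g x = ∫ x in tsupport ψ, g x := fun g hg =>
    setIntegral_eq_of_subset_of_forall_sdiff_eq_zero hΩ.measurableSet hψ.2.2
      (fun x hx => hg x hx.2)
  have hz : ∀ x, x ∉ tsupport ψ → ψ x = 0 := fun x hx => image_eq_zero_of_notMem_tsupport hx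
  set s := ∫ x in Ω, ψ x * v x with hsdef
  have hs0 : 0 < |s| ^ p := Real.rpow_pos_of_pos (abs_pos.mpr hs) _
  refine ⟨2 ^ p * (1 + k) / |s| ^ p, by positivity, fun u hu m => ?_⟩
  have hw := (cont_quot hΩ hv hu).1.continuous
  have hsK : s = ∫ x in tsupport ψ, ψ x * v x := hres _ (fun x hx => by simp [hz x hx])
  have hIK : ∫ x in Ω, u x * ψ x = ∫ x in tsupport ψ, u x * ψ x :=
    hres _ (fun x hx => by simp [hz x hx])
  have e1 : m * s = (∫ x in Ω, u x * ψ x) + -∫ x in tsupport ψ, (u x / v x - m) * (ψ x * v x) := by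
    have i1 : IntegrableOn (fun x => u x * ψ x) (tsupport ψ) :=
      int_on hK (hu.1.continuous.mul hψ.1.continuous)
    have i2 : IntegrableOn (fun x => m * (ψ x * v x)) (tsupport ψ) :=
      (hcφ.integrableOn_compact hK).const_mul _
    have : ∫ x in tsupport ψ, (u x / v x - m) * (ψ x * v x) =
        ∫ x in tsupport ψ, (u x * ψ x - m * (ψ x * v x)) := by
      refine setIntegral_congr_fun hK.measurableSet (fun x hx => ?_)
      have := (hv.2.1 x (hψ.2.2 hx)).ne'
      field_simp
    rw [this, integral_sub i1 i2, integral_const_mul, ← hsK, ← hIK]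
    ring
  have e2 := hkk (fun x => u x / v x - m) (hw.sub continuous_const)
  have e3 := abs_add_rpow_le hp (∫ x in Ω, u x * ψ x)
    (-∫ x in tsupport ψ, (u x / v x - m) * (ψ x * v x))
  rw [← e1, abs_neg, abs_mul, Real.mul_rpow (abs_nonneg _) (abs_nonneg _)] at e3
  set A := ∫ x in tsupport ψ, |u x / v x - m| ^ p
  have hA : 0 ≤ A := integral_nonneg fun x => by positivity
  set I := |∫ x in Ω, u x * ψ x| ^ p with hI
  have hI0 : 0 ≤ I := by positivity
  rw [div_mul_eq_mul_div, le_div_iff₀ hs0, mul_assoc]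
  refine e3.trans ?_
  gcongr
  refine (add_le_add_right e2 _).trans ?_
  nlinarith [mul_nonneg hk.le hI0]

lemma N_est {Ω : Set (Euc d)} (hΩ : IsOpen Ω) {V : Euc d → ℝ}
    {p : ℝ} (hp : 1 < p) (hQ : ∀ u : Euc d → ℝ, IsTestFun Ω u → 0 ≤ energyQ Ω V p u)
    {v : Euc d → ℝ} (hv : IsGroundState Ω V p v) {x0 : Euc d} {r0 : ℝ} {m : (Euc d → ℝ) → ℝ}
    (h0 : Pr Ω V p v (Metric.ball x0 r0) m x0 r0)
    (hall : ∀ x ∈ Ω, ∃ r > 0, Pr Ω V p v (Metric.ball x0 r0) m x r)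
    {ψ : Euc d → ℝ} (hψ : IsTestFun Ω ψ) (hs : (∫ x in Ω, ψ x * v x) ≠ 0) :
    ∃ C > 0, ∀ u, IsTestFun Ω u → ∫ x in Metric.ball x0 r0, |u x / v x| ^ p ≤
      C * (energyQ Ω V p u + |∫ x in Ω, u x * ψ x| ^ p) := by
  obtain ⟨k, hk, hkk⟩ := mean_est hΩ hp hv hψ hs
  set b := volume.real (Metric.ball x0 r0) + 1 with hb
  have hb0 : 0 < b := by positivity
  set t : ℝ := 2 ^ p with ht
  have ht0 : 0 < t := by positivity
  obtain ⟨C1, hC1, h1⟩ := compact_est hΩ hp hQ hv hall hψ.2.1 hψ.2.2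
    (ε := 1 / (4 * t * b * k)) (by positivity)
  obtain ⟨C2, hC2, h2⟩ := h0.2 (1 / (4 * t)) (by positivity)
  refine ⟨2 * (t * C2 + t * b * k * (1 + C1)), by positivity, fun u hu => ?_⟩
  have a1 := h1 u hu
  have a2 := h2 u hu
  have a3 := hkk u hu (m u)
  have a4 := int_tri hp (cont_quot hΩ hv hu).1.continuous (cb x0 r0) measurableSet_ball 0 (m u)
  simp only [sub_zero] at a4
  have q0 := hQ u hu
  set N := ∫ x in Metric.ball x0 r0, |u x / v x| ^ p
  set q := energyQ Ω V p u
  set A := ∫ x in tsupport ψ, |u x / v x - m u| ^ p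
  set I := |∫ x in Ω, u x * ψ x| ^ p with hI
  set D := ∫ x in Metric.ball x0 r0, |u x / v x - m u| ^ p
  have hI0 : 0 ≤ I := by positivity
  have c1 : N ≤ t * ((C2 * q + 1 / (4 * t) * N) + (k * (I + (C1 * q + 1 / (4 * t * b * k) * N))) * b) := by
    refine a4.trans ?_
    have : volume.real (Metric.ball x0 r0) ≤ b := by rw [hb]; linarith
    refine mul_le_mul_of_nonneg_left (add_le_add a2 ?_) ht0.le
    refine mul_le_mul (a3.trans ?_) this (by positivity) ?_
    · gcongr
    · refine le_trans ?_ (a3.trans ?_)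
      · positivity
      · gcongr
  have c2 : t * ((C2 * q + 1 / (4 * t) * N) + (k * (I + (C1 * q + 1 / (4 * t * b * k) * N))) * b) =
      t * C2 * q + t * b * k * (I + C1 * q) + N / 2 := by
    field_simp
    ring
  have c3 : 0 ≤ t * C2 * I := by positivity
  have c4 : 0 ≤ t * b * k * q := by positivity
  have c5 : 0 ≤ t * b * k * C1 * I := by positivity
  nlinarith

end PT

/-- **Poincaré-type inequality.** If `Q ≥ 0` admits a ground state `v`, then there is a
positive continuous weight `W` on `Ω` such that for every test function `ψ` with
`∫ ψ v ≠ 0` there is `C > 0` with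
`C⁻¹ ∫ W |u|^p ≤ Q(u) + C |∫ u ψ|^p` for all test functions `u`. -/
theorem poincare_type_inequality {d : ℕ} (hd : 2 ≤ d)
    (Ω : Set (Euc d)) (hΩo : IsOpen Ω) (hΩc : IsConnected Ω)
    {p : ℝ} (hp₁ : 1 < p) (V : Euc d → ℝ) (hV : LocBddPotential Ω V)
    (hQ : ∀ u : Euc d → ℝ, IsTestFun Ω u → 0 ≤ energyQ Ω V p u)
    (v : Euc d → ℝ) (hv : IsGroundState Ω V p v) :
    ∃ W : Euc d → ℝ, ContinuousOn W Ω ∧ (∀ x ∈ Ω, 0 < W x) ∧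
      ∀ ψ : Euc d → ℝ, IsTestFun Ω ψ → (∫ x in Ω, ψ x * v x) ≠ 0 →
        ∃ C : ℝ, 0 < C ∧
          ∀ u : Euc d → ℝ, IsTestFun Ω u →
            C⁻¹ * ∫ x in Ω, W x * |u x| ^ p ≤
              energyQ Ω V p u + C * |∫ x in Ω, u x * ψ x| ^ p := by

  obtain ⟨x0, r0, hr0, hb0, m, hm0, hall⟩ := PT.Pr_all hΩo hΩc hV hp₁ hQ hv
  obtain ⟨W, hWc, hWpos, hW⟩ := PT.weight_exists hΩo hΩc.nonempty hp₁ hQ hv hall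
  refine ⟨fun x => W x / v x ^ p, ?_, ?_, ?_⟩
  · refine hWc.continuousOn.div (hv.1.continuousOn.rpow_const fun x hx => Or.inr (by linarith))
      (fun x hx => (Real.rpow_pos_of_pos (hv.2.1 x hx) _).ne')
  · exact fun x hx => div_pos (hWpos x hx) (Real.rpow_pos_of_pos (hv.2.1 x hx) _)
  · intro ψ hψ hs
    obtain ⟨C1, hC1, h1⟩ := PT.N_est hΩo hp₁ hQ hv hm0 hall hψ hs
    refine ⟨2 * (1 + C1), by positivity, fun u hu => ?_⟩
    have e : ∫ x in Ω, W x / v x ^ p * |u x| ^ p = ∫ x in Ω, W x * |u x / v x| ^ p := by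
      refine setIntegral_congr_fun hΩo.measurableSet (fun x hx => ?_)
      have hvx := hv.2.1 x hx
      simp only [abs_div, abs_of_pos hvx]
      rw [Real.div_rpow (abs_nonneg _) hvx.le]
      ring
    have a1 := hW u hu
    have a2 := h1 u hu
    have q0 := hQ u hu
    rw [e, inv_mul_le_iff₀ (by positivity)]
    have I0 : 0 ≤ |∫ x in Ω, u x * ψ x| ^ p := by positivity
    have hX := mul_nonneg hC1.le I0
    have hY := mul_nonneg hC1.le hX
    have hZ := mul_nonneg hC1.le q0
    refine a1.trans ?_
    nlinarith
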